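/- arXiv:2211.12066 — 2 statements merged into one kernel-verified Lean document; each statement's English description precedes it below -/
import Mathlib

section
/- Let N ≥ 3, q ∈ [1,∞], and β, γ ∈ ℝ with β ≠ -N and γ < -N. Then there exists a constant C₅ > 0 (depending only on N, q, β, γ) such that for every f ∈ L^q_{β,γ}: ∫_{ℝ^N\B(0,R)} |f| dx ≤ C₅ ‖f‖_{L^q_{β,γ}} R^{min{β+N,0}} for 0 < R ≤ 1, and ∫_{ℝ^N\B(0,R)} |f| dx ≤ C₅ ‖f‖_{L^q_{β,γ}} R^{γ+N} for R > 1. -/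
/-!
The estimate comes from a dyadic decomposition. On a single annulus, Hölder's inequality and
`|A(0,r)| ≤ |B(0,1)| r^N` turn the definition of the norm into
`∫_{A(0,r)} |f| ≤ K r^N ω_{β,γ}(r) ‖f‖` (`lintegral_annulusA_le`). Hence the integral of `|f|` over
a set covered by annuli `A(0,r_k)` is controlled as soon as `r_k^N ω_{β,γ}(r_k)` decays
geometrically (`lintegral_le_of_cover`).

The complement of `B(0,R)` is covered by the annuli of radii `2^{k+1} R`.

* For `R ≥ 1` all these radii exceed `1`, and the terms are `(2^{k+1} R)^{γ+N}`, geometric since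
  `γ + N < 0`.
* For `R ≤ 1` and `s = β + N < 0`, put `t = max s (γ + N) < 0`. Each term is at most
  `R^s (2^{k+1})^t`, whether its radius lies below or above `1`.
* For `R ≤ 1` and `s > 0`, the part outside `B(0,1)` is bounded by the first case, and the punctured
  open unit ball is covered by the annuli of radii `2^{-k}`, with terms `(2^{-k})^s`.
-/

open MeasureTheory Metric ENNReal Filter

noncomputable section

abbrev Euc (N : ℕ) : Type := EuclideanSpace ℝ (Fin N)

/-- The fundamental solution `Γ(x) = |x|^{2-N} / (N (N-2) ω_N)` of `-Δ` on `ℝ^N`. -/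
def fundSol (N : ℕ) (x : Euc N) : ℝ :=
  ‖x‖ ^ (2 - (N : ℝ)) / ((N : ℝ) * ((N : ℝ) - 2) * (volume (ball (0 : Euc N) 1)).toReal)

/-- The annulus `A(0,R) = B(0,R) \ B(0,R/2)`. -/
def annulusA (N : ℕ) (R : ℝ) : Set (Euc N) := ball (0 : Euc N) R \ ball 0 (R / 2)

/-- The weight `ω_{β,γ}(R)`. -/
def omegaWt (β γ R : ℝ) : ℝ := if R ≤ 1 then R ^ β else R ^ γ

/-- The weighted norm `‖f‖_{L^q_{β,γ}} = sup_{R>0} R^{-N/q} ω_{β,γ}(R)⁻¹ ‖f‖_{L^q(A(0,R))}`. -/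
def wNorm (N : ℕ) (q : ℝ≥0∞) (β γ : ℝ) (f : Euc N → ℝ) : ℝ≥0∞ :=
  ⨆ R : {R : ℝ // 0 < R},
    ENNReal.ofReal (((R : ℝ) ^ (-((N : ℝ) / q.toReal))) / omegaWt β γ (R : ℝ)) *
      eLpNorm f q (volume.restrict (annulusA N (R : ℝ)))

/-- Membership in the weighted space `L^q_{β,γ}`. -/
def MemW (N : ℕ) (q : ℝ≥0∞) (β γ : ℝ) (f : Euc N → ℝ) : Prop :=
  AEStronglyMeasurable f volume ∧ wNorm N q β γ f < ⊤

/-- `(Γ * f)(x) = ∫ Γ(x-y) f(y) dy` as an `ℝ≥0∞`-valued integral (for `f ≥ 0`). -/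
def GammaConvFn (N : ℕ) (f : Euc N → ℝ) (x : Euc N) : ℝ≥0∞ :=
  ∫⁻ y, ENNReal.ofReal (fundSol N (x - y)) * ENNReal.ofReal (f y)

/-- `(Γ * μ)(x) = ∫ Γ(x-y) dμ(y)`. -/
def GammaConvMeas (N : ℕ) (μ : Measure (Euc N)) (x : Euc N) : ℝ≥0∞ :=
  ∫⁻ y, ENNReal.ofReal (fundSol N (x - y)) ∂μ

/-- A solution of problem `(P_κ)`. -/
def IsSolution (N : ℕ) (α : Euc N → ℝ) (p : ℝ) (μ : Measure (Euc N)) (κ : ℝ)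
    (u : Euc N → ℝ) : Prop :=
  Measurable u ∧ (∀ᵐ x, 0 < u x) ∧
    ∀ᵐ x, ENNReal.ofReal (u x)
      = GammaConvFn N (fun y => α y * u y ^ p) x + ENNReal.ofReal κ * GammaConvMeas N μ x

/-- A minimal solution of problem `(P_κ)`. -/
def IsMinSolution (N : ℕ) (α : Euc N → ℝ) (p : ℝ) (μ : Measure (Euc N)) (κ : ℝ)
    (u : Euc N → ℝ) : Prop :=
  IsSolution N α p μ κ u ∧ ∀ v, IsSolution N α p μ κ v → ∀ᵐ x, u x ≤ v x

lemma omegaWt_pos (β γ : ℝ) {r : ℝ} (hr : 0 < r) : 0 < omegaWt β γ r := by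
  unfold omegaWt; split_ifs <;> positivity

/-- The constant `|B(0,1)|^{1-1/q}` produced by Hölder's inequality on an annulus. -/
def holderConst (N : ℕ) (q : ℝ≥0∞) : ℝ :=
  (volume (ball (0 : Euc N) 1)).toReal ^ (1 - 1 / q.toReal)

lemma holderConst_pos (N : ℕ) (q : ℝ≥0∞) : 0 < holderConst N q := by
  unfold holderConst
  have : 0 < (volume (ball (0 : Euc N) 1)).toReal :=
    ENNReal.toReal_pos (measure_ball_pos _ _ one_pos).ne' measure_ball_lt_top.ne
  positivity

lemma one_div_toReal_le_one {q : ℝ≥0∞} (hq : 1 ≤ q) : 1 / q.toReal ≤ 1 := by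
  rcases eq_or_ne q ⊤ with rfl | h
  · simp
  · have : 1 ≤ q.toReal := by
      simpa using (ENNReal.toReal_le_toReal one_ne_top h).2 hq
    rw [div_le_one (by linarith)]; exact this

/-- The definition of the norm, solved for the `L^q` norm on one annulus. For `q = ∞` the exponent
`N / q.toReal` is `N / 0 = 0`, as it should be. -/
lemma eLpNorm_annulusA_le (N : ℕ) (q : ℝ≥0∞) (β γ : ℝ) (f : Euc N → ℝ) {r : ℝ} (hr : 0 < r) :
    eLpNorm f q (volume.restrict (annulusA N r))
      ≤ ENNReal.ofReal (r ^ ((N : ℝ) / q.toReal) * omegaWt β γ r) * wNorm N q β γ f := by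
  have hω := omegaWt_pos β γ hr
  have h1 : ENNReal.ofReal (r ^ (-((N : ℝ) / q.toReal)) / omegaWt β γ r) *
      eLpNorm f q (volume.restrict (annulusA N r)) ≤ wNorm N q β γ f :=
    le_iSup (fun R : {R : ℝ // 0 < R} =>
      ENNReal.ofReal (((R : ℝ) ^ (-((N : ℝ) / q.toReal))) / omegaWt β γ (R : ℝ)) *
        eLpNorm f q (volume.restrict (annulusA N (R : ℝ)))) ⟨r, hr⟩
  refine le_trans (le_of_eq ?_) (mul_le_mul_right h1 _)
  rw [← mul_assoc, ← ENNReal.ofReal_mul (by positivity), Real.rpow_neg hr.le]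
  have hp : r ^ ((N : ℝ) / q.toReal) ≠ 0 := by positivity
  have : r ^ ((N : ℝ) / q.toReal) * omegaWt β γ r *
      ((r ^ ((N : ℝ) / q.toReal))⁻¹ / omegaWt β γ r) = 1 := by
    field_simp
  rw [this]; simp

lemma volume_annulusA_rpow_le (N : ℕ) {q : ℝ≥0∞} (hq : 1 ≤ q) {r : ℝ} (hr : 0 < r) :
    (volume (annulusA N r)) ^ (1 - 1 / q.toReal)
      ≤ ENNReal.ofReal (holderConst N q * r ^ ((N : ℝ) - (N : ℝ) / q.toReal)) := by
  have hq' : 0 ≤ 1 - 1 / q.toReal := by linarith [one_div_toReal_le_one hq]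
  have h1 : volume (annulusA N r)
      ≤ ENNReal.ofReal ((volume (ball (0 : Euc N) 1)).toReal * r ^ N) := by
    refine (measure_mono (Set.sdiff_subset)).trans (le_of_eq ?_)
    rw [Measure.addHaar_ball_of_pos _ _ hr, ENNReal.ofReal_mul ENNReal.toReal_nonneg,
      ENNReal.ofReal_toReal measure_ball_lt_top.ne, mul_comm]
    simp
  refine (ENNReal.rpow_le_rpow h1 hq').trans (le_of_eq ?_)
  rw [ENNReal.ofReal_rpow_of_nonneg (by positivity) hq',
    Real.mul_rpow ENNReal.toReal_nonneg (by positivity), holderConst, ← Real.rpow_natCast,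
    ← Real.rpow_mul hr.le]
  congr 3
  ring

/-- Hölder's inequality on one annulus: `∫_{A(0,r)} |f| ≤ K r^N ω_{β,γ}(r) ‖f‖`. -/
lemma lintegral_annulusA_le (N : ℕ) {q : ℝ≥0∞} (β γ : ℝ) (hq : 1 ≤ q) {f : Euc N → ℝ}
    (hf : AEStronglyMeasurable f volume) {r : ℝ} (hr : 0 < r) :
    ∫⁻ x in annulusA N r, ENNReal.ofReal |f x|
      ≤ ENNReal.ofReal (holderConst N q * (r ^ (N : ℝ) * omegaWt β γ r)) * wNorm N q β γ f := by
  have hω := omegaWt_pos β γ hr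
  have hK := holderConst_pos N q
  have h1 := eLpNorm_le_eLpNorm_mul_rpow_measure_univ hq
    (hf.restrict (s := annulusA N r))
  rw [eLpNorm_one_eq_lintegral_enorm, Measure.restrict_apply_univ, ENNReal.toReal_one,
    div_one] at h1
  have h2 : ∫⁻ x in annulusA N r, ENNReal.ofReal |f x| = ∫⁻ x in annulusA N r, ‖f x‖ₑ := by
    simp only [← Real.norm_eq_abs, ofReal_norm]
  rw [h2]
  refine (h1.trans (mul_le_mul' (eLpNorm_annulusA_le N q β γ f hr)
    (volume_annulusA_rpow_le N hq hr))).trans (le_of_eq ?_)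
  rw [mul_right_comm, ← ENNReal.ofReal_mul (by positivity)]
  congr 2
  have : r ^ (N : ℝ) = r ^ ((N : ℝ) / q.toReal) * r ^ ((N : ℝ) - (N : ℝ) / q.toReal) := by
    rw [← Real.rpow_add hr]; congr 1; ring
  rw [this]; ring

/-- A set covered by countably many annuli whose bounds `r_k^N ω_{β,γ}(r_k)` are dominated by a
geometric sequence. -/
lemma lintegral_le_of_cover (N : ℕ) {q : ℝ≥0∞} (β γ : ℝ) (hq : 1 ≤ q) {f : Euc N → ℝ}
    (hf : AEStronglyMeasurable f volume) {S : Set (Euc N)} {r : ℕ → ℝ} (hr : ∀ k, 0 < r k)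
    (hS : S ⊆ ⋃ k, annulusA N (r k)) {B ρ : ℝ} (hB : 0 ≤ B) (hρ : 0 ≤ ρ) (hρ1 : ρ < 1)
    (h : ∀ k, r k ^ (N : ℝ) * omegaWt β γ (r k) ≤ B * ρ ^ k) :
    ∫⁻ x in S, ENNReal.ofReal |f x|
      ≤ ENNReal.ofReal (holderConst N q / (1 - ρ) * B) * wNorm N q β γ f := by
  have hK := holderConst_pos N q
  calc ∫⁻ x in S, ENNReal.ofReal |f x|
      ≤ ∫⁻ x in ⋃ k, annulusA N (r k), ENNReal.ofReal |f x| := lintegral_mono_set hS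
    _ ≤ ∑' k, ∫⁻ x in annulusA N (r k), ENNReal.ofReal |f x| := lintegral_iUnion_le _ _
    _ ≤ ∑' k, ENNReal.ofReal (holderConst N q * B * ρ ^ k) * wNorm N q β γ f := by
        refine ENNReal.tsum_le_tsum fun k => (lintegral_annulusA_le N β γ hq hf (hr k)).trans ?_
        rw [mul_assoc]
        exact mul_le_mul_left (ENNReal.ofReal_le_ofReal (mul_le_mul_of_nonneg_left (h k) hK.le)) _
    _ = ENNReal.ofReal (holderConst N q / (1 - ρ) * B) * wNorm N q β γ f := by
        rw [ENNReal.tsum_mul_right, ← ENNReal.ofReal_tsum_of_nonneg (fun k => by positivity)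
          ((summable_geometric_of_lt_one hρ hρ1).mul_left _), tsum_mul_left,
          tsum_geometric_of_lt_one hρ hρ1]
        congr 2
        ring

lemma ball_compl_subset (N : ℕ) {R : ℝ} (hR : 0 < R) :
    (ball (0 : Euc N) R)ᶜ ⊆ ⋃ k : ℕ, annulusA N (2 ^ (k + 1) * R) := by
  intro x hx
  have hx : R ≤ ‖x‖ := by simpa using hx
  obtain ⟨n, h1, h2⟩ := exists_nat_pow_near ((one_le_div hR).2 hx) (one_lt_two (α := ℝ))
  rw [le_div_iff₀ hR] at h1
  rw [div_lt_iff₀ hR] at h2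
  refine Set.mem_iUnion.2 ⟨n, ?_⟩
  simp only [annulusA, Set.mem_sdiff, mem_ball_zero_iff, not_lt]
  refine ⟨h2, le_trans (le_of_eq ?_) h1⟩
  ring

lemma ball_compl_subset_union (N : ℕ) {R : ℝ} (hR : 0 < R) :
    (ball (0 : Euc N) R)ᶜ ⊆ (ball 0 1)ᶜ ∪ ⋃ k : ℕ, annulusA N ((1 / 2) ^ k) := by
  intro x hx
  have hx : R ≤ ‖x‖ := by simpa using hx
  by_cases h1 : ‖x‖ < 1
  · right
    -- The first `n` with `2^{-n} ≤ |x|` puts `x` into `A(0, 2^{-(n-1)})`.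
    have hex : ∃ n : ℕ, (1 / 2 : ℝ) ^ n ≤ ‖x‖ :=
      (exists_pow_lt_of_lt_one (hR.trans_le hx) one_half_lt_one).imp fun _ h => h.le
    obtain ⟨m, hm⟩ : ∃ m, Nat.find hex = m + 1 := by
      refine Nat.exists_eq_succ_of_ne_zero fun h0 => ?_
      have := Nat.find_spec hex
      rw [h0, pow_zero] at this
      linarith
    have h2 := Nat.find_spec hex
    have h3 := Nat.find_min hex (m := m) (by rw [hm]; exact m.lt_succ_self)
    rw [hm] at h2
    refine Set.mem_iUnion.2 ⟨m, ?_⟩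
    simp only [annulusA, Set.mem_sdiff, mem_ball_zero_iff, not_lt]
    refine ⟨not_le.1 h3, le_trans (le_of_eq ?_) h2⟩
    ring
  · left; simpa using h1

lemma two_pow_succ_rpow (a : ℝ) (k : ℕ) :
    ((2 : ℝ) ^ (k + 1)) ^ a = 2 ^ a * (2 ^ a) ^ k := by
  rw [← Real.rpow_natCast, ← Real.rpow_natCast, ← Real.rpow_mul (by norm_num),
    ← Real.rpow_mul (by norm_num), ← Real.rpow_add (by norm_num)]
  congr 1; push_cast; ring

lemma rpow_mul_omegaWt_of_le {N : ℕ} {β γ r : ℝ} (hr : 0 < r) (h : r ≤ 1) :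
    r ^ (N : ℝ) * omegaWt β γ r = r ^ (β + N) := by
  rw [omegaWt, if_pos h, ← Real.rpow_add hr, add_comm]

lemma rpow_mul_omegaWt_of_lt {N : ℕ} {β γ r : ℝ} (h : 1 < r) :
    r ^ (N : ℝ) * omegaWt β γ r = r ^ (γ + N) := by
  rw [omegaWt, if_neg h.not_ge, ← Real.rpow_add (one_pos.trans h), add_comm]

/-- The case `R ≥ 1`, where only the weight exponent `γ` is seen. -/
lemma lintegral_ball_compl_of_one_le (N : ℕ) {q : ℝ≥0∞} (β : ℝ) {γ : ℝ} (hq : 1 ≤ q)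
    (hγ : γ + N < 0) {f : Euc N → ℝ} (hf : AEStronglyMeasurable f volume) {R : ℝ} (hR : 1 ≤ R) :
    ∫⁻ x in (ball (0 : Euc N) R)ᶜ, ENNReal.ofReal |f x|
      ≤ ENNReal.ofReal (holderConst N q / (1 - 2 ^ (γ + N)) *
          (2 ^ (γ + N) * R ^ (γ + N))) * wNorm N q β γ f := by
  have hR0 : 0 < R := by linarith
  refine lintegral_le_of_cover N β γ hq hf (fun k => by positivity) (ball_compl_subset N hR0)
    (by positivity) (by positivity) (Real.rpow_lt_one_of_one_lt_of_neg one_lt_two hγ) fun k => ?_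
  have h1 : (1 : ℝ) < 2 ^ (k + 1) := one_lt_pow₀ _root_.one_lt_two k.succ_ne_zero
  rw [rpow_mul_omegaWt_of_lt (by nlinarith), Real.mul_rpow (by positivity) hR0.le,
    two_pow_succ_rpow]
  apply le_of_eq; ring

/-- The case `R ≤ 1`, `β + N < 0`. The ratio `2^t` with `t = max (β + N) (γ + N)` serves the annuli on
both sides of the unit sphere. -/
lemma lintegral_ball_compl_of_le_one_neg (N : ℕ) {q : ℝ≥0∞} {β γ : ℝ} (hq : 1 ≤ q)
    (hβ : β + N < 0) (hγ : γ + N < 0) {f : Euc N → ℝ} (hf : AEStronglyMeasurable f volume)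
    {R : ℝ} (hR0 : 0 < R) (hR : R ≤ 1) {t : ℝ} (ht : t = max (β + N) (γ + N)) :
    ∫⁻ x in (ball (0 : Euc N) R)ᶜ, ENNReal.ofReal |f x|
      ≤ ENNReal.ofReal (holderConst N q / (1 - 2 ^ t) *
          (2 ^ t * R ^ (β + N))) * wNorm N q β γ f := by
  have ht0 : t < 0 := ht ▸ max_lt hβ hγ
  have hβt : β + N ≤ t := ht ▸ le_max_left _ _
  have hγt : γ + N ≤ t := ht ▸ le_max_right _ _
  refine lintegral_le_of_cover N β γ hq hf (fun k => by positivity) (ball_compl_subset N hR0)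
    (by positivity) (by positivity) (Real.rpow_lt_one_of_one_lt_of_neg one_lt_two ht0) fun k => ?_
  have h1 : (1 : ℝ) < 2 ^ (k + 1) := one_lt_pow₀ _root_.one_lt_two k.succ_ne_zero
  have h2 : (2 : ℝ) ^ t * R ^ (β + N) * (2 ^ t) ^ k = (2 ^ (k + 1)) ^ t * R ^ (β + N) := by
    rw [two_pow_succ_rpow]; ring
  rw [h2]
  rcases le_or_gt (2 ^ (k + 1) * R) 1 with h | h
  · rw [rpow_mul_omegaWt_of_le (by positivity) h, Real.mul_rpow (by positivity) hR0.le]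
    gcongr
    exact h1.le
  · rw [rpow_mul_omegaWt_of_lt h]
    calc (2 ^ (k + 1) * R) ^ (γ + N) ≤ (2 ^ (k + 1) * R) ^ t :=
          Real.rpow_le_rpow_of_exponent_le h.le hγt
      _ = (2 ^ (k + 1)) ^ t * R ^ t := Real.mul_rpow (by positivity) hR0.le
      _ ≤ (2 ^ (k + 1)) ^ t * R ^ (β + N) := by
          gcongr ?_ * ?_
          exact Real.rpow_le_rpow_of_exponent_ge hR0 hR hβt

/-- The case `β + N > 0`: a bound uniform in `R`, so `f` is integrable up to the origin. -/
lemma lintegral_ball_compl_of_pos (N : ℕ) {q : ℝ≥0∞} {β γ : ℝ} (hq : 1 ≤ q)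
    (hβ : 0 < β + N) (hγ : γ + N < 0) {f : Euc N → ℝ} (hf : AEStronglyMeasurable f volume)
    {R : ℝ} (hR0 : 0 < R) :
    ∫⁻ x in (ball (0 : Euc N) R)ᶜ, ENNReal.ofReal |f x|
      ≤ ENNReal.ofReal (holderConst N q / (1 - 2 ^ (γ + N)) * 2 ^ (γ + N) +
          holderConst N q / (1 - (1 / 2) ^ (β + N))) * wNorm N q β γ f := by
  have hK := holderConst_pos N q
  have hργ : (2 : ℝ) ^ (γ + N) < 1 := Real.rpow_lt_one_of_one_lt_of_neg one_lt_two hγ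
  have hρβ : (1 / 2 : ℝ) ^ (β + N) < 1 :=
    Real.rpow_lt_one (by norm_num) (by norm_num) hβ
  have hout := lintegral_ball_compl_of_one_le N β hq hγ hf le_rfl
  have hin := lintegral_le_of_cover N β γ hq hf (r := fun k => (1 / 2) ^ k)
    (fun k => by positivity) subset_rfl zero_le_one (by positivity) hρβ fun k => by
      rw [rpow_mul_omegaWt_of_le (by positivity) (pow_le_one₀ (by norm_num) (by norm_num)),
        one_mul, ← Real.rpow_natCast, ← Real.rpow_natCast, ← Real.rpow_mul (by norm_num),
        ← Real.rpow_mul (by norm_num), mul_comm]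
  rw [Real.one_rpow, mul_one] at hout
  rw [mul_one] at hin
  have h1 := sub_pos.2 hργ
  have h2 := sub_pos.2 hρβ
  rw [ENNReal.ofReal_add (by positivity) (by positivity), add_mul]
  exact (lintegral_mono_set (ball_compl_subset_union N hR0)).trans
    ((lintegral_union_le _ _ _).trans (add_le_add hout hin))

/-- **Lemma 2.1 (5)**: if `β ≠ -N` and `γ < -N`, then for `f ∈ L^q_{β,γ}`,
`∫_{ℝ^N \ B(0,R)} |f| ≤ C ‖f‖_{L^q_{β,γ}} R^{min{β+N,0}}` for `R ≤ 1` and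
`∫_{ℝ^N \ B(0,R)} |f| ≤ C ‖f‖_{L^q_{β,γ}} R^{γ+N}` for `R > 1`. -/
theorem wSpace_ball_complement_integral
    (N : ℕ) (hN : 3 ≤ N) (q : ℝ≥0∞) (β γ : ℝ) (hq : 1 ≤ q)
    (hβ : β ≠ -(N : ℝ)) (hγ : γ < -(N : ℝ)) :
    ∃ C : ℝ, 0 < C ∧ ∀ f : Euc N → ℝ, MemW N q β γ f →
      (∀ R : ℝ, 0 < R → R ≤ 1 →
        ∫⁻ x in (ball (0 : Euc N) R)ᶜ, ENNReal.ofReal |f x|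
          ≤ ENNReal.ofReal (C * R ^ (min (β + (N : ℝ)) 0)) * wNorm N q β γ f) ∧
      (∀ R : ℝ, 1 < R →
        ∫⁻ x in (ball (0 : Euc N) R)ᶜ, ENNReal.ofReal |f x|
          ≤ ENNReal.ofReal (C * R ^ (γ + (N : ℝ))) * wNorm N q β γ f) := by
  have hγ' : γ + N < 0 := by linarith
  have hK := holderConst_pos N q
  have hργ : (2 : ℝ) ^ (γ + N) < 1 := Real.rpow_lt_one_of_one_lt_of_neg one_lt_two hγ'
  have h1 := sub_pos.2 hργ
  -- It is enough to find a constant for `R ≤ 1` and add to it the explicit one for `R > 1`.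
  obtain ⟨D, hD, hDf⟩ : ∃ D : ℝ, 0 < D ∧ ∀ f : Euc N → ℝ, AEStronglyMeasurable f volume →
      ∀ R : ℝ, 0 < R → R ≤ 1 → ∫⁻ x in (ball (0 : Euc N) R)ᶜ, ENNReal.ofReal |f x|
        ≤ ENNReal.ofReal (D * R ^ (min (β + (N : ℝ)) 0)) * wNorm N q β γ f := by
    rcases lt_or_gt_of_ne hβ with h | h
    · have hβ' : β + N < 0 := by linarith
      have h2 := sub_pos.2 (Real.rpow_lt_one_of_one_lt_of_neg one_lt_two (max_lt hβ' hγ'))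
      refine ⟨holderConst N q / (1 - 2 ^ max (β + N) (γ + N)) * 2 ^ max (β + N) (γ + N),
        by positivity, fun f hf R hR0 hR => ?_⟩
      rw [min_eq_left hβ'.le, mul_assoc]
      exact lintegral_ball_compl_of_le_one_neg N hq hβ' hγ' hf hR0 hR rfl
    · have hβ' : 0 < β + N := by linarith
      have h2 := sub_pos.2 (Real.rpow_lt_one (x := 1 / 2) (by norm_num) (by norm_num) hβ')
      refine ⟨holderConst N q / (1 - 2 ^ (γ + N)) * 2 ^ (γ + N) +
          holderConst N q / (1 - (1 / 2) ^ (β + N)), by positivity, fun f hf R hR0 _ => ?_⟩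
      rw [min_eq_right hβ'.le, Real.rpow_zero, mul_one]
      exact lintegral_ball_compl_of_pos N hq hβ' hγ' hf hR0
  refine ⟨D + holderConst N q / (1 - 2 ^ (γ + N)) * 2 ^ (γ + N), by positivity,
    fun f hf => ⟨fun R hR0 hR => (hDf f hf.1 R hR0 hR).trans ?_, fun R hR =>
      (lintegral_ball_compl_of_one_le N β hq hγ' hf.1 hR.le).trans ?_⟩⟩
  · gcongr
    exact le_add_of_nonneg_right (by positivity)
  · have hR0 : 0 < R := by linarith
    rw [← mul_assoc]
    gcongr
    exact le_add_of_nonneg_left hD.le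
end
end

section
/- Let N ≥ 3 and let β, γ ∈ ℝ satisfy β > -N, β ≠ -2, γ < -2, γ ≠ -N. Let q ∈ [1,∞] with q ≠ N/2, and let r satisfy: r ∈ [q,∞) with 1/q - 1/r < 2/N if q < N/2, and r = ∞ if q > N/2. Then there exists a constant C > 0 such that ‖Γ*f‖_{L^r_{β_*,γ_*}} ≤ C ‖f‖_{L^q_{β,γ}} for every f ∈ L^q_{β,γ}, where β_* := min{β+2, 0}, γ_* := max{γ+2, -N+2}, and (Γ*f)(x) := ∫_{ℝ^N} Γ(x-y) f(y) dy. -/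
/-!
The potential is estimated at `x ∈ A(0, R)`, for each `R > 0`, by splitting the domain of
integration into the inner ball `|y| < R/4`, the outer region `|y| ≥ 2R`, and the annuli
`A(0, R/2)`, `A(0, R)`, `A(0, 2R)` in between.

In the inner ball `Γ(x - y)` is at most a multiple of `R^{2-N}`, and in the outer region at most a
multiple of `|y|^{2-N}`. By Hölder's inequality (`DyadicBound.lintegral_le`) the mass of `|f|` on
`A(0, ρ)` is at most a multiple of `ω_{N+β,N+γ}(ρ) ‖f‖`, and summing over dyadic `ρ` gives
geometric series: the inner sum (`inner_le`, through `ball_le`) converges at `0` because `β > -N`,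
and beyond scale `1` it has no logarithm because `γ ≠ -N`; the outer sum (`outer_le`, through
`compl_ball_le`) converges at `∞` because `γ < -2`, and has no logarithm because `β ≠ -2`. The terms
in which the series converges instead of being dominated by the scale `R` produce the alternatives
`0` and `-N + 2` in `β_*` and `γ_*`. Both regions contribute pointwise bounds by a multiple of
`ω_{β_*,γ_*}(R) ‖f‖`.

In the middle region the kernel may be truncated to `|z| < 3R`. The truncation lies in `L^s`,
`1/s = 1 + 1/r - 1/q`, precisely because `1/q - 1/r < 2/N`, and Young's inequality (`young`)
with scaling yields the bound (`middle_le`). The condition `1/q - 1/r < 2/N` also holds for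
`q > N/2`, `r = ∞`, so the two cases of the theorem are treated together.
-/

open MeasureTheory Metric ENNReal Filter

noncomputable section

/-! ### The weights -/

/-- A form of the weight without case distinction: the factors `min R 1` and `max R 1` carry the
exponents at `0` and at `∞`. -/
lemma omegaWt_eq (b c : ℝ) (R : ℝ) :
    omegaWt b c R = min R 1 ^ b * max R 1 ^ c := by
  unfold omegaWt
  split_ifs with h
  · simp [h]
  · simp [(not_le.mp h).le]

lemma omegaWt_pos_s9 (b c : ℝ) {R : ℝ} (hR : 0 < R) : 0 < omegaWt b c R := by
  unfold omegaWt
  split_ifs <;> positivity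

lemma omegaWt_one (b c : ℝ) : omegaWt b c 1 = 1 := by simp [omegaWt]

lemma omegaWt_of_le (b c : ℝ) {R : ℝ} (h : R ≤ 1) : omegaWt b c R = R ^ b := by
  simp [omegaWt, h]

lemma omegaWt_of_lt (b c : ℝ) {R : ℝ} (h : 1 < R) : omegaWt b c R = R ^ c := by
  simp [omegaWt, h]

lemma omegaWt_self (b : ℝ) (R : ℝ) : omegaWt b b R = R ^ b := by
  simp [omegaWt]

lemma rpow_mul_omegaWt (s b c : ℝ) {R : ℝ} (hR : 0 < R) :
    R ^ s * omegaWt b c R = omegaWt (s + b) (s + c) R := by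
  unfold omegaWt
  split_ifs <;> rw [Real.rpow_add hR]

lemma omegaWt_mono {b c b' c' R : ℝ} (hR : 0 < R) (hb : b' ≤ b) (hc : c ≤ c') :
    omegaWt b c R ≤ omegaWt b' c' R := by
  unfold omegaWt
  split_ifs with h
  · exact Real.rpow_le_rpow_of_exponent_ge hR h hb
  · exact Real.rpow_le_rpow_of_exponent_le (not_le.mp h).le hc

lemma rpow_ratio_le {x y b d : ℝ} (hx : 0 < x) (hy : 0 < y)
    (h : (x / y) ^ b ≤ (x / y) ^ d) : x ^ b ≤ y ^ b * (x / y) ^ d := by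
  have : x ^ b = y ^ b * (x / y) ^ b := by
    rw [Real.div_rpow hx.le hy.le]; field_simp
  rw [this]
  gcongr

/-- Multiplying the distortions of the two factors `min R 1` and `max R 1`, whose product is `R`. -/
lemma omegaWt_ratio_le {b c d r R : ℝ} (hr : 0 < r) (hR : 0 < R)
    (hb : (min r 1 / min R 1) ^ b ≤ (min r 1 / min R 1) ^ d)
    (hc : (max r 1 / max R 1) ^ c ≤ (max r 1 / max R 1) ^ d) :
    omegaWt b c r ≤ omegaWt b c R * (r / R) ^ d := by
  have h1 : 0 < min r 1 := by positivity
  have h2 : 0 < min R 1 := by positivity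
  have h3 : 0 < max r 1 := by positivity
  have h4 : 0 < max R 1 := by positivity
  have e : r / R = (min r 1 / min R 1) * (max r 1 / max R 1) := by
    rw [div_mul_div_comm, min_mul_max, min_mul_max, mul_one, mul_one]
  rw [omegaWt_eq, omegaWt_eq, e, Real.mul_rpow (by positivity) (by positivity)]
  calc _ ≤ (min R 1 ^ b * (min r 1 / min R 1) ^ d) * (max R 1 ^ c * (max r 1 / max R 1) ^ d) :=
        mul_le_mul (rpow_ratio_le h1 h2 hb) (rpow_ratio_le h3 h4 hc) (by positivity) (by positivity)
    _ = _ := by ring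

/-- Towards smaller scales the weight decays at least like the power with the smaller exponent,
so dyadic sums can be compared with geometric series. -/
lemma omegaWt_decay_in {b c d r R : ℝ} (hb : d ≤ b) (hc : d ≤ c) (hr : 0 < r) (hrR : r ≤ R) :
    omegaWt b c r ≤ omegaWt b c R * (r / R) ^ d := by
  have hR : 0 < R := hr.trans_le hrR
  refine omegaWt_ratio_le hr hR ?_ ?_
  · exact Real.rpow_le_rpow_of_exponent_ge (by positivity)
      (div_le_one_of_le₀ (min_le_min_right _ hrR) (by positivity)) hb
  · exact Real.rpow_le_rpow_of_exponent_ge (by positivity)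
      (div_le_one_of_le₀ (max_le_max_right _ hrR) (by positivity)) hc

/-- The analogue of `omegaWt_decay_in` towards larger scales. -/
lemma omegaWt_decay_out {b c d r R : ℝ} (hb : b ≤ d) (hc : c ≤ d) (hR : 0 < R) (hrR : R ≤ r) :
    omegaWt b c r ≤ omegaWt b c R * (r / R) ^ d := by
  have hr : 0 < r := hR.trans_le hrR
  refine omegaWt_ratio_le hr hR ?_ ?_
  · refine Real.rpow_le_rpow_of_exponent_le ?_ hb
    rw [one_le_div (by positivity)]
    exact min_le_min_right _ hrR
  · refine Real.rpow_le_rpow_of_exponent_le ?_ hc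
    rw [one_le_div (by positivity)]
    exact max_le_max_right _ hrR

/-- The weight is doubling. -/
lemma omegaWt_double (b c : ℝ) {r R : ℝ} (hR : 0 < R) (h1 : R / 2 ≤ r) (h2 : r ≤ 2 * R) :
    omegaWt b c r ≤ 2 ^ (|b| + |c|) * omegaWt b c R := by
  have hr : 0 < r := by linarith
  have k1 : (1:ℝ) ≤ 2 ^ (|b| + |c|) := Real.one_le_rpow (by norm_num) (by positivity)
  have hp := omegaWt_pos_s9 b c hR
  rcases le_total r R with h | h
  · have := omegaWt_decay_in (d := -(|b| + |c|)) (b := b) (c := c)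
      (by linarith [neg_abs_le b, abs_nonneg c]) (by linarith [neg_abs_le c, abs_nonneg b]) hr h
    refine this.trans ?_
    rw [mul_comm]
    gcongr
    rw [Real.rpow_neg (by positivity), ← Real.inv_rpow (by positivity), inv_div]
    gcongr
    rw [div_le_iff₀ hr]; linarith
  · have := omegaWt_decay_out (d := |b| + |c|) (b := b) (c := c)
      (by linarith [le_abs_self b, abs_nonneg c]) (by linarith [le_abs_self c, abs_nonneg b]) hR h
    refine this.trans ?_
    rw [mul_comm]
    gcongr
    rw [div_le_iff₀ hR]; linarith

/-! ### Dyadic decomposition -/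

lemma mem_annulusA {N : ℕ} {R : ℝ} {y : Euc N} : y ∈ annulusA N R ↔ R / 2 ≤ ‖y‖ ∧ ‖y‖ < R := by
  simp [annulusA, and_comm]

lemma measurableSet_annulusA (N : ℕ) (R : ℝ) : MeasurableSet (annulusA N R) :=
  measurableSet_ball.diff measurableSet_ball

lemma ball_subset_iUnion (N : ℕ) {R : ℝ} :
    ball (0 : Euc N) R ⊆ {0} ∪ ⋃ k : ℕ, annulusA N (R * (1 / 2) ^ k) := by
  intro y hy
  rcases eq_or_ne y 0 with h0 | h0
  · exact Or.inl h0
  refine Or.inr (Set.mem_iUnion.mpr ?_)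
  have hy' : ‖y‖ < R := by simpa using hy
  have hy0 : 0 < ‖y‖ := norm_pos_iff.mpr h0
  have hR : 0 < R := hy0.trans hy'
  have hex : ∃ k : ℕ, R * (1 / 2) ^ (k + 1) ≤ ‖y‖ := by
    obtain ⟨k, hk⟩ := exists_pow_lt_of_lt_one (div_pos hy0 hR) (by norm_num : (1 / 2 : ℝ) < 1)
    refine ⟨k, ?_⟩
    rw [lt_div_iff₀ hR] at hk
    have : (0:ℝ) < (1 / 2) ^ k := by positivity
    rw [pow_succ]; nlinarith
  classical
  refine ⟨Nat.find hex, mem_annulusA.mpr ⟨?_, ?_⟩⟩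
  · have := Nat.find_spec hex
    rw [pow_succ] at this; linarith
  · rcases hk : Nat.find hex with _ | m
    · simpa using hy'
    · have := Nat.find_min hex (m := m) (by omega)
      exact not_le.mp this

lemma compl_ball_subset_iUnion (N : ℕ) {R : ℝ} (hR : 0 < R) :
    (ball (0 : Euc N) R)ᶜ ⊆ ⋃ k : ℕ, annulusA N (R * 2 ^ (k + 1)) := by
  intro y hy
  have hy' : R ≤ ‖y‖ := by simpa using hy
  obtain ⟨k, h1, h2⟩ := exists_nat_pow_near ((one_le_div hR).mpr hy') (by norm_num : (1:ℝ) < 2)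
  rw [le_div_iff₀ hR] at h1
  rw [div_lt_iff₀ hR] at h2
  refine Set.mem_iUnion.mpr ⟨k, mem_annulusA.mpr ⟨?_, by linarith⟩⟩
  rw [pow_succ]; linarith

lemma tsum_geom_le {C t : ℝ} (hC : 0 ≤ C) (ht : 0 ≤ t) (ht1 : t < 1) (M : ℝ≥0∞) :
    ∑' k : ℕ, ENNReal.ofReal (C * t ^ k) * M = ENNReal.ofReal (C * (1 - t)⁻¹) * M := by
  rw [ENNReal.tsum_mul_right, ← ENNReal.ofReal_tsum_of_nonneg (fun n => by positivity)
    ((summable_geometric_of_lt_one ht ht1).mul_left C), tsum_mul_left,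
    tsum_geometric_of_lt_one ht ht1]

/-- With positive exponents the dyadic series over the scales below `R` is dominated by its term
at scale `R`. The hypothesis is needed only for scales `ρ ≤ R`. -/
lemma ball_le_of_pos {N : ℕ} {b c : ℝ} (hb : 0 < b) (hc : 0 < c) :
    ∃ C : ℝ, 0 < C ∧ ∀ (μ : Measure (Euc N)) (M : ℝ≥0∞) (R : ℝ), μ {0} = 0 → 0 < R →
      (∀ ρ, 0 < ρ → ρ ≤ R → μ (annulusA N ρ) ≤ ENNReal.ofReal (omegaWt b c ρ) * M) →
      μ (ball 0 R) ≤ ENNReal.ofReal (C * omegaWt b c R) * M := by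
  set d := min b c with hd
  have hd0 : 0 < d := lt_min hb hc
  have ht1 : (1 / 2 : ℝ) ^ d < 1 := Real.rpow_lt_one (by norm_num) (by norm_num) hd0
  refine ⟨(1 - (1 / 2 : ℝ) ^ d)⁻¹, by rw [inv_pos]; linarith, fun μ M R h0 hR h => ?_⟩
  calc μ (ball 0 R) ≤ μ ({0} ∪ ⋃ k : ℕ, annulusA N (R * (1 / 2) ^ k)) :=
        measure_mono (ball_subset_iUnion N)
    _ ≤ μ {0} + μ (⋃ k : ℕ, annulusA N (R * (1 / 2) ^ k)) := measure_union_le _ _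
    _ ≤ 0 + ∑' k : ℕ, μ (annulusA N (R * (1 / 2) ^ k)) := by
        rw [h0]; gcongr; exact measure_iUnion_le _
    _ ≤ ∑' k : ℕ, ENNReal.ofReal (omegaWt b c R * ((1 / 2 : ℝ) ^ d) ^ k) * M := by
        rw [zero_add]
        refine ENNReal.tsum_le_tsum fun k => ?_
        have hle : R * (1 / 2) ^ k ≤ R :=
          mul_le_of_le_one_right hR.le (pow_le_one₀ (by norm_num) (by norm_num))
        refine (h _ (by positivity) hle).trans ?_
        gcongr
        refine (omegaWt_decay_in (min_le_left b c) (min_le_right b c)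
          (by positivity) hle).trans (le_of_eq ?_)
        rw [mul_div_cancel_left₀ _ hR.ne', ← hd, ← Real.rpow_natCast, ← Real.rpow_natCast,
          ← Real.rpow_mul (by norm_num), ← Real.rpow_mul (by norm_num), mul_comm d]
    _ = _ := by
        rw [tsum_geom_le (omegaWt_pos_s9 b c hR).le (by positivity) ht1, mul_comm (omegaWt b c R)]

/-- With negative exponents the dyadic series over the scales above `R` is dominated by its term
at scale `R`. The hypothesis is needed only for scales `ρ > R`. -/
lemma compl_ball_le_of_neg {N : ℕ} {b c : ℝ} (hb : b < 0) (hc : c < 0) :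
    ∃ C : ℝ, 0 < C ∧ ∀ (μ : Measure (Euc N)) (M : ℝ≥0∞) (R : ℝ), 0 < R →
      (∀ ρ, R < ρ → μ (annulusA N ρ) ≤ ENNReal.ofReal (omegaWt b c ρ) * M) →
      μ (ball 0 R)ᶜ ≤ ENNReal.ofReal (C * omegaWt b c R) * M := by
  set d := max b c with hd
  have hd0 : d < 0 := max_lt hb hc
  have ht1 : (2 : ℝ) ^ d < 1 := Real.rpow_lt_one_of_one_lt_of_neg (by norm_num) hd0
  refine ⟨(1 - (2 : ℝ) ^ d)⁻¹, by rw [inv_pos]; linarith, fun μ M R hR h => ?_⟩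
  calc μ (ball 0 R)ᶜ ≤ μ (⋃ k : ℕ, annulusA N (R * 2 ^ (k + 1))) :=
        measure_mono (compl_ball_subset_iUnion N hR)
    _ ≤ ∑' k : ℕ, μ (annulusA N (R * 2 ^ (k + 1))) := measure_iUnion_le _
    _ ≤ ∑' k : ℕ, ENNReal.ofReal (omegaWt b c R * ((2 : ℝ) ^ d) ^ k) * M := by
        refine ENNReal.tsum_le_tsum fun k => ?_
        have hlt : R < R * 2 ^ (k + 1) :=
          lt_mul_of_one_lt_right hR (one_lt_pow₀ (by norm_num) (by omega))
        refine (h _ hlt).trans ?_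
        gcongr
        refine (omegaWt_decay_out (le_max_left b c) (le_max_right b c) hR hlt.le).trans ?_
        have := (omegaWt_pos_s9 b c hR).le
        gcongr
        rw [mul_div_cancel_left₀ _ hR.ne', ← hd, ← Real.rpow_natCast, ← Real.rpow_natCast,
          ← Real.rpow_mul (by norm_num), ← Real.rpow_mul (by norm_num)]
        refine Real.rpow_le_rpow_of_exponent_le (by norm_num) ?_
        push_cast
        nlinarith
    _ = _ := by
        rw [tsum_geom_le (omegaWt_pos_s9 b c hR).le (by positivity) ht1, mul_comm (omegaWt b c R)]

/-- If the dyadic series over small scales converges (`0 < b`), then the mass of a ball is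
controlled; beyond scale `1` the series is either dominated by its last term (`0 < c`) or
convergent (`c < 0`). The borderline case `c = 0` would produce a logarithm. -/
lemma ball_le {N : ℕ} {b c : ℝ} (hb : 0 < b) (hc : c ≠ 0) :
    ∃ C : ℝ, 0 < C ∧ ∀ (μ : Measure (Euc N)) (M : ℝ≥0∞) (R : ℝ), μ {0} = 0 → 0 < R →
      (∀ ρ, 0 < ρ → μ (annulusA N ρ) ≤ ENNReal.ofReal (omegaWt b c ρ) * M) →
      μ (ball 0 R) ≤ ENNReal.ofReal (C * omegaWt b (max c 0) R) * M := by
  rcases hc.lt_or_gt with hc | hc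
  · obtain ⟨C₁, hC₁, h₁⟩ := ball_le_of_pos (N := N) hb one_pos
    -- Below scale `1` only `b` matters and above it only `c`; the exponents `1` and `-1` are dummies.
    obtain ⟨C₂, hC₂, h₂⟩ := compl_ball_le_of_neg (N := N) (b := -1) (by norm_num) hc
    refine ⟨C₁ + C₂, by positivity, fun μ M R h0 hR h => ?_⟩
    have key : ∀ r, 0 < r → r ≤ 1 → μ (ball 0 r) ≤ ENNReal.ofReal (C₁ * r ^ b) * M := by
      intro r hr hr1
      have := h₁ μ M r h0 hr fun ρ hρ hρr => by
        simpa [omegaWt_of_le _ _ (hρr.trans hr1)] using h ρ hρ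
      rwa [omegaWt_of_le _ _ hr1] at this
    rcases le_or_gt R 1 with hR1 | hR1
    · refine (key R hR hR1).trans ?_
      rw [omegaWt_of_le _ _ hR1]
      gcongr
      linarith
    · have k2 := h₂ μ M 1 one_pos fun ρ hρ => by
        simpa [omegaWt_of_lt _ _ hρ] using h ρ (by linarith)
      have k1 := key 1 one_pos le_rfl
      rw [omegaWt_of_lt _ _ hR1, max_eq_right hc.le, Real.rpow_zero, mul_one,
        ENNReal.ofReal_add hC₁.le hC₂.le, add_mul]
      rw [omegaWt_one, mul_one] at k2
      rw [Real.one_rpow, mul_one] at k1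
      calc μ (ball 0 R) ≤ μ (ball 0 1 ∪ (ball 0 1)ᶜ) := measure_mono (by simp)
        _ ≤ _ := (measure_union_le _ _).trans (add_le_add k1 k2)
  · obtain ⟨C, hC, h⟩ := ball_le_of_pos (N := N) hb hc
    refine ⟨C, hC, fun μ M R h0 hR hμ => ?_⟩
    rw [max_eq_left hc.le]
    exact h μ M R h0 hR fun ρ hρ _ => hμ ρ hρ

/-- The counterpart of `ball_le` at infinity: the dyadic series over large scales converges
(`c < 0`), and `b = 0` is the logarithmic borderline case. -/
lemma compl_ball_le {N : ℕ} {b c : ℝ} (hb : b ≠ 0) (hc : c < 0) :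
    ∃ C : ℝ, 0 < C ∧ ∀ (μ : Measure (Euc N)) (M : ℝ≥0∞) (R : ℝ), μ {0} = 0 → 0 < R →
      (∀ ρ, 0 < ρ → μ (annulusA N ρ) ≤ ENNReal.ofReal (omegaWt b c ρ) * M) →
      μ (ball 0 R)ᶜ ≤ ENNReal.ofReal (C * omegaWt (min b 0) c R) * M := by
  rcases hb.lt_or_gt with hb | hb
  · obtain ⟨C, hC, h⟩ := compl_ball_le_of_neg (N := N) hb hc
    refine ⟨C, hC, fun μ M R h0 hR hμ => ?_⟩
    rw [min_eq_left hb.le]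
    exact h μ M R hR fun ρ hρ => hμ ρ (hR.trans hρ)
  · obtain ⟨C₁, hC₁, h₁⟩ := ball_le_of_pos (N := N) hb one_pos
    obtain ⟨C₂, hC₂, h₂⟩ := compl_ball_le_of_neg (N := N) (b := -1) (by norm_num) hc
    refine ⟨C₁ + C₂, by positivity, fun μ M R h0 hR h => ?_⟩
    have key : ∀ r, 1 ≤ r → μ (ball 0 r)ᶜ ≤ ENNReal.ofReal (C₂ * omegaWt (-1) c r) * M := by
      intro r hr
      refine h₂ μ M r (by linarith) fun ρ hρ => ?_
      have := h ρ (by linarith)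
      rwa [omegaWt_of_lt _ _ (hr.trans_lt hρ)] at this ⊢
    rcases le_or_gt R 1 with hR1 | hR1
    · have k1 := h₁ μ M 1 h0 one_pos fun ρ hρ hρr => by
        simpa [omegaWt_of_le _ _ hρr] using h ρ hρ
      have k2 := key 1 le_rfl
      rw [omegaWt_of_le _ _ hR1, min_eq_right hb.le, Real.rpow_zero, mul_one,
        ENNReal.ofReal_add hC₁.le hC₂.le, add_mul]
      rw [omegaWt_one, mul_one] at k1 k2
      calc μ (ball 0 R)ᶜ ≤ μ (ball 0 1 ∪ (ball 0 1)ᶜ) := measure_mono (by simp)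
        _ ≤ _ := (measure_union_le _ _).trans (add_le_add k1 k2)
    · refine (key R hR1.le).trans ?_
      rw [omegaWt_of_lt _ _ hR1, omegaWt_of_lt _ _ hR1]
      gcongr
      linarith

/-! ### Young's convolution inequality -/

/-- The pointwise Hölder step in the proof of Young's inequality. The value `r = 0` (for which
`1 / r = 0` by convention) covers the exponent `r = ∞`. -/
lemma young_pointwise {N : ℕ} {q r s : ℝ} (hq : 1 ≤ q) (hr : 0 ≤ r) (hqr : 1 / r ≤ 1 / q)
    (hs0 : 0 < s) (hs : 1 / s = 1 + 1 / r - 1 / q) {k F : Euc N → ℝ≥0∞} (hk : Measurable k)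
    (hF : Measurable F) (x : Euc N) :
    ∫⁻ y, k (x - y) * F y ≤ (∫⁻ y, k (x - y) ^ s * F y ^ q) ^ (1 / r) *
      (∫⁻ z, k z ^ s) ^ (1 - 1 / q) * (∫⁻ y, F y ^ q) ^ (1 / q - 1 / r) := by
  have hq0 : 0 < q := by linarith
  have hr' : 0 ≤ 1 / r := by positivity
  have hq1 : 1 / q ≤ 1 := by rw [div_le_one hq0]; exact hq
  have hkx : Measurable fun y => k (x - y) := hk.comp (measurable_const.sub measurable_id)
  have e1 : s * (1 / r) + s * (1 - 1 / q) = 1 := by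
    rw [← mul_add, show 1 / r + (1 - 1 / q) = 1 / s by rw [hs]; ring]
    field_simp
  have e2 : q * (1 / r) + q * (1 / q - 1 / r) = 1 := by
    rw [← mul_add, show 1 / r + (1 / q - 1 / r) = 1 / q by ring]
    field_simp
  -- Write `k F` as the product of `(k ^ s F ^ q) ^ (1 / r)`, `(k ^ s) ^ (1 - 1 / q)` and
  -- `(F ^ q) ^ (1 / q - 1 / r)`, and apply Hölder with three factors.
  have H := ENNReal.lintegral_prod_norm_pow_le (μ := (volume : Measure (Euc N)))
    (Finset.univ : Finset (Fin 3))
    (f := ![fun y => k (x - y) ^ s * F y ^ q, fun y => k (x - y) ^ s, fun y => F y ^ q])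
    (p := ![1 / r, 1 - 1 / q, 1 / q - 1 / r])
    (by
      intro i _
      fin_cases i
      · exact ((hkx.pow_const s).mul (hF.pow_const q)).aemeasurable
      · exact (hkx.pow_const s).aemeasurable
      · exact (hF.pow_const q).aemeasurable)
    (by
      simp only [Fin.sum_univ_three, Matrix.cons_val_zero, Matrix.cons_val_one, Matrix.cons_val]
      ring)
    (by
      intro i _
      fin_cases i
      · exact hr'
      · exact sub_nonneg.mpr hq1
      · exact sub_nonneg.mpr hqr)
  simp only [Fin.prod_univ_three, Matrix.cons_val_zero, Matrix.cons_val_one, Matrix.cons_val] at H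
  rw [lintegral_sub_left_eq_self (fun z => k z ^ s) x] at H
  refine le_trans (le_of_eq (lintegral_congr fun y => ?_)) H
  rw [ENNReal.mul_rpow_of_nonneg _ _ hr', ← ENNReal.rpow_mul, ← ENNReal.rpow_mul,
    ← ENNReal.rpow_mul, ← ENNReal.rpow_mul]
  calc k (x - y) * F y = k (x - y) ^ (s * (1 / r) + s * (1 - 1 / q)) *
        F y ^ (q * (1 / r) + q * (1 / q - 1 / r)) := by rw [e1, e2]; simp
    _ = _ := by
      rw [ENNReal.rpow_add_of_nonneg _ _ (by positivity)
          (mul_nonneg hs0.le (sub_nonneg.mpr hq1)),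
        ENNReal.rpow_add_of_nonneg _ _ (by positivity)
          (mul_nonneg hq0.le (sub_nonneg.mpr hqr))]
      ring

lemma measurable_conv {N : ℕ} {k F : Euc N → ℝ≥0∞} (hk : Measurable k) (hF : Measurable F) :
    Measurable fun x => ∫⁻ y, k (x - y) * F y := by
  refine Measurable.lintegral_prod_right' (f := fun p : Euc N × Euc N => k (p.1 - p.2) * F p.2) ?_
  exact (hk.comp (measurable_fst.sub measurable_snd)).mul (hF.comp measurable_snd)

/-- Tonelli: the `L¹` norm of a convolution of nonnegative functions. -/
lemma lintegral_conv {N : ℕ} {k F : Euc N → ℝ≥0∞} (hk : Measurable k) (hF : Measurable F) :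
    ∫⁻ x, ∫⁻ y, k (x - y) * F y = (∫⁻ z, k z) * ∫⁻ y, F y := by
  rw [lintegral_lintegral_swap]
  · have : ∀ y, ∫⁻ x, k (x - y) * F y = (∫⁻ z, k z) * F y := fun y => by
      have hm : Measurable fun x => k (x - y) := hk.comp (measurable_id.sub measurable_const)
      rw [lintegral_mul_const _ hm, lintegral_sub_right_eq_self (fun z => k z) y]
    simp_rw [this]
    exact lintegral_const_mul _ hF
  · exact ((hk.comp (measurable_fst.sub measurable_snd)).mul
      (hF.comp measurable_snd)).aemeasurable

/-- Young's inequality `‖k * F‖_r ≤ ‖k‖_s ‖F‖_q` for nonnegative functions, `1/s = 1 + 1/r - 1/q`;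
the value of `toReal` at `∞` is `0`, so the relation between the exponents is the usual one there. -/
lemma young {N : ℕ} {q r : ℝ≥0∞} {s : ℝ} (hq : 1 ≤ q) (hqr : q ≤ r)
    (hs0 : 0 < s) (hs : 1 / s = 1 + 1 / r.toReal - 1 / q.toReal) {k F : Euc N → ℝ≥0∞}
    (hk : Measurable k) (hF : Measurable F) :
    eLpNorm (fun x => ∫⁻ y, k (x - y) * F y) r volume ≤
      (∫⁻ z, k z ^ s) ^ (1 / s) * eLpNorm F q volume := by
  have hq0 : q ≠ 0 := (zero_lt_one.trans_le hq).ne'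
  rcases eq_or_ne q ⊤ with hqt | hqt
  · have hrt : r = ⊤ := top_le_iff.mp (hqt ▸ hqr)
    subst hqt hrt
    have hs1 : s = 1 := by
      simp only [ENNReal.toReal_top, _root_.div_zero, add_zero, sub_zero] at hs
      field_simp at hs; exact hs.symm
    subst hs1
    rw [eLpNorm_exponent_top, eLpNorm_exponent_top]
    refine eLpNormEssSup_le_of_ae_enorm_bound (Eventually.of_forall fun x => ?_)
    have hb : ∀ᵐ y, k (x - y) * F y ≤ k (x - y) * eLpNormEssSup F volume := by
      filter_upwards [enorm_ae_le_eLpNormEssSup F volume] with y hy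
      exact mul_le_mul_right hy _
    rw [enorm_eq_self]
    refine (lintegral_mono_ae hb).trans (le_of_eq ?_)
    have hm : Measurable fun y => k (x - y) := hk.comp (measurable_const.sub measurable_id)
    rw [lintegral_mul_const _ hm, lintegral_sub_left_eq_self (fun z => k z) x]
    simp
  have hqr1 : 1 ≤ q.toReal := by
    rw [← ENNReal.toReal_one]
    exact ENNReal.toReal_mono hqt hq
  have hqr0 : 0 < q.toReal := by linarith
  have hqr' : 1 / r.toReal ≤ 1 / q.toReal := by
    rcases eq_or_ne r ⊤ with hrt | hrt
    · simp [hrt]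
    · exact one_div_le_one_div_of_le hqr0 (ENNReal.toReal_mono hrt hqr)
  have P := young_pointwise hqr1 ENNReal.toReal_nonneg hqr' hs0 hs hk hF
  rcases eq_or_ne r ⊤ with hrt | hrt
  · subst hrt
    rw [eLpNorm_exponent_top]
    refine eLpNormEssSup_le_of_ae_enorm_bound (Eventually.of_forall fun x => ?_)
    rw [enorm_eq_self]
    refine (P x).trans (le_of_eq ?_)
    rw [eLpNorm_eq_lintegral_rpow_enorm_toReal hq0 hqt, hs]
    simp
  have hr0 : r ≠ 0 := (zero_lt_one.trans_le (hq.trans hqr)).ne'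
  have hrp : 0 < r.toReal := ENNReal.toReal_pos hr0 hrt
  rw [eLpNorm_eq_lintegral_rpow_enorm_toReal hr0 hrt, eLpNorm_eq_lintegral_rpow_enorm_toReal hq0 hqt]
  simp only [enorm_eq_self]
  set ρ := r.toReal
  set κ := q.toReal
  have hκ1 : 0 ≤ 1 - 1 / κ := by
    rw [sub_nonneg, div_le_one hqr0]; exact hqr1
  set I := ∫⁻ z, k z ^ s
  set J := ∫⁻ y, F y ^ κ
  have step : ∫⁻ x, (∫⁻ y, k (x - y) * F y) ^ ρ ≤
      I * J * (I ^ (1 - 1 / κ) * J ^ (1 / κ - 1 / ρ)) ^ ρ := by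
    calc ∫⁻ x, (∫⁻ y, k (x - y) * F y) ^ ρ
        ≤ ∫⁻ x, (∫⁻ y, k (x - y) ^ s * F y ^ κ) *
            (I ^ (1 - 1 / κ) * J ^ (1 / κ - 1 / ρ)) ^ ρ := by
          refine lintegral_mono fun x => ?_
          refine (ENNReal.rpow_le_rpow (P x) hrp.le).trans (le_of_eq ?_)
          rw [mul_assoc, ENNReal.mul_rpow_of_nonneg _ _ hrp.le, ← ENNReal.rpow_mul,
            one_div_mul_cancel hrp.ne', ENNReal.rpow_one]
      _ = _ := by
          rw [lintegral_mul_const _ (measurable_conv (hk.pow_const s) (hF.pow_const κ)),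
            lintegral_conv (hk.pow_const s) (hF.pow_const κ)]
  refine (ENNReal.rpow_le_rpow step (by positivity : 0 ≤ 1 / ρ)).trans (le_of_eq ?_)
  rw [ENNReal.mul_rpow_of_nonneg _ _ (by positivity), ← ENNReal.rpow_mul,
    mul_one_div_cancel hrp.ne', ENNReal.rpow_one, ENNReal.mul_rpow_of_nonneg _ _ (by positivity)]
  calc _ = (I ^ (1 / ρ) * I ^ (1 - 1 / κ)) * (J ^ (1 / ρ) * J ^ (1 / κ - 1 / ρ)) := by ring
    _ = _ := by
      rw [← ENNReal.rpow_add_of_nonneg _ _ (by positivity) hκ1,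
        ← ENNReal.rpow_add_of_nonneg _ _ (by positivity) (sub_nonneg.mpr hqr'), hs]
      congr 2 <;> ring

/-! ### Integrals over annuli -/

/-- The volume of the unit ball of `ℝ^N`. -/
def ballVol (N : ℕ) : ℝ := (volume (ball (0 : Euc N) 1)).toReal

lemma ballVol_pos (N : ℕ) : 0 < ballVol N :=
  ENNReal.toReal_pos (measure_ball_pos volume _ one_pos).ne' measure_ball_lt_top.ne

lemma volume_annulusA_le (N : ℕ) {R : ℝ} (hR : 0 < R) :
    volume (annulusA N R) ≤ ENNReal.ofReal (R ^ (N : ℝ) * ballVol N) := by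
  refine (measure_mono Set.sdiff_subset).trans (le_of_eq ?_)
  rw [Measure.addHaar_ball_of_pos _ _ hR, ENNReal.ofReal_mul (by positivity), ballVol,
    ENNReal.ofReal_toReal measure_ball_lt_top.ne, finrank_euclideanSpace_fin, Real.rpow_natCast]

lemma volume_singleton_zero {N : ℕ} (hN : 3 ≤ N) : volume ({0} : Set (Euc N)) = 0 := by
  have : Nonempty (Fin N) := ⟨⟨0, by omega⟩⟩
  exact measure_singleton _

lemma withDensity_annulusA_le {N : ℕ} {a R : ℝ} (ha : a ≤ 0) (hR : 0 < R) (F : Euc N → ℝ≥0∞) :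
    volume.withDensity (fun y => ENNReal.ofReal (‖y‖ ^ a) * F y) (annulusA N R) ≤
      ENNReal.ofReal ((R / 2) ^ a) * ∫⁻ y in annulusA N R, F y := by
  rw [withDensity_apply _ (measurableSet_annulusA N R),
    ← lintegral_const_mul' _ _ ENNReal.ofReal_ne_top]
  refine setLIntegral_mono' (measurableSet_annulusA N R) fun y hy => ?_
  exact mul_le_mul_left (ENNReal.ofReal_le_ofReal
    (Real.rpow_le_rpow_of_nonpos (by positivity) (mem_annulusA.mp hy).1 ha)) _

/-- The kernel `|z|^{-p}` is locally integrable for `p < N`, with the scaling of its mass. -/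
lemma lintegral_ball_rpow_le {N : ℕ} (hN : 3 ≤ N) {p : ℝ} (hp : 0 ≤ p) (hpN : p < N) :
    ∃ C : ℝ, 0 < C ∧ ∀ R : ℝ, 0 < R →
      ∫⁻ z in ball (0 : Euc N) R, ENNReal.ofReal (‖z‖ ^ (-p)) ≤
        ENNReal.ofReal (C * R ^ ((N : ℝ) - p)) := by
  have hd : 0 < (N : ℝ) - p := by linarith
  obtain ⟨C, hC, h⟩ := ball_le_of_pos (N := N) hd hd
  have hv := ballVol_pos N
  refine ⟨C * (2 ^ p * ballVol N), by positivity, fun R hR => ?_⟩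
  have := h (volume.withDensity fun y => ENNReal.ofReal (‖y‖ ^ (-p)) * 1)
    (ENNReal.ofReal (2 ^ p * ballVol N)) R
    (withDensity_absolutelyContinuous _ _ (volume_singleton_zero hN)) hR fun ρ hρ _ => by
      refine (withDensity_annulusA_le (by linarith) hρ _).trans ?_
      rw [setLIntegral_one]
      refine (mul_le_mul_right (volume_annulusA_le N hρ) _).trans (le_of_eq ?_)
      rw [← ENNReal.ofReal_mul (by positivity), ← ENNReal.ofReal_mul (omegaWt_pos_s9 _ _ hρ).le,
        omegaWt_self, Real.div_rpow hρ.le (by norm_num), Real.rpow_neg (by norm_num : (0:ℝ) ≤ 2),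
        sub_eq_add_neg, Real.rpow_add hρ]
      congr 1
      field_simp
  simp only [mul_one] at this
  rw [withDensity_apply _ measurableSet_ball, omegaWt_self, ← ENNReal.ofReal_mul (by positivity)]
    at this
  refine this.trans (le_of_eq ?_)
  congr 1; ring

/-- `M` bounds the weighted norm of `g`, read off scale by scale. -/
def DyadicBound (N : ℕ) (q : ℝ≥0∞) (β γ : ℝ) (g : Euc N → ℝ) (M : ℝ≥0∞) : Prop :=
  ∀ R : ℝ, 0 < R → eLpNorm g q (volume.restrict (annulusA N R)) ≤
    ENNReal.ofReal (R ^ ((N : ℝ) / q.toReal) * omegaWt β γ R) * M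

/-- Hölder's inequality on an annulus. -/
lemma DyadicBound.lintegral_le {N : ℕ} {q : ℝ≥0∞} {β γ : ℝ} {g : Euc N → ℝ} {M : ℝ≥0∞}
    (h : DyadicBound N q β γ g M) (hq : 1 ≤ q) (hg : StronglyMeasurable g) {R : ℝ} (hR : 0 < R) :
    ∫⁻ y in annulusA N R, ‖g y‖ₑ ≤ ENNReal.ofReal (omegaWt (N + β) (N + γ) R) *
      (ENNReal.ofReal (ballVol N ^ (1 - 1 / q.toReal)) * M) := by
  have hv := ballVol_pos N
  have hw := (omegaWt_pos_s9 β γ hR).le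
  have hq1 : 0 ≤ 1 - 1 / q.toReal := by
    rcases eq_or_ne q ⊤ with hqt | hqt
    · simp [hqt]
    · have : 1 ≤ q.toReal := by
        rw [← ENNReal.toReal_one]; exact ENNReal.toReal_mono hqt hq
      rw [sub_nonneg, div_le_one (by linarith)]; exact this
  have H := eLpNorm_le_eLpNorm_mul_rpow_measure_univ (μ := volume.restrict (annulusA N R)) hq
    hg.aestronglyMeasurable
  rw [eLpNorm_one_eq_lintegral_enorm, Measure.restrict_apply_univ, ENNReal.toReal_one,
    div_one] at H
  refine H.trans ((mul_le_mul' (h R hR) (ENNReal.rpow_le_rpow (volume_annulusA_le N hR) hq1)).trans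
    (le_of_eq ?_))
  rw [ENNReal.ofReal_rpow_of_nonneg (by positivity) hq1, mul_right_comm, ← mul_assoc,
    ← ENNReal.ofReal_mul (by positivity), ← ENNReal.ofReal_mul (omegaWt_pos_s9 _ _ hR).le]
  congr 2
  rw [← rpow_mul_omegaWt _ _ _ hR, Real.mul_rpow (by positivity) hv.le, ← Real.rpow_mul hR.le]
  have : R ^ (N : ℝ) = R ^ ((N : ℝ) / q.toReal) * R ^ ((N : ℝ) * (1 - 1 / q.toReal)) := by
    rw [← Real.rpow_add hR]; congr 1; ring
  rw [this]; ring

/-! ### The Newtonian potential -/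

/-- The constant `1 / (N (N-2) ω_N)` of the fundamental solution. -/
def fundC (N : ℕ) : ℝ := 1 / ((N : ℝ) * ((N : ℝ) - 2) * ballVol N)

lemma fundC_pos {N : ℕ} (hN : 3 ≤ N) : 0 < fundC N := by
  have h3 : (3 : ℝ) ≤ N := by exact_mod_cast hN
  have := ballVol_pos N
  have : 0 < (N : ℝ) - 2 := by linarith
  unfold fundC
  positivity

lemma fundSol_eq (N : ℕ) (x : Euc N) : fundSol N x = fundC N * ‖x‖ ^ (2 - (N : ℝ)) := by
  unfold fundSol fundC ballVol
  ring

lemma measurable_fundSol (N : ℕ) : Measurable fun x : Euc N => ENNReal.ofReal (fundSol N x) := by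
  simp_rw [fundSol_eq]
  exact ((measurable_norm.pow_const _).const_mul _).ennreal_ofReal

lemma fundSol_le {N : ℕ} (hN : 3 ≤ N) {x : Euc N} {d : ℝ} (hd : 0 < d) (h : d ≤ ‖x‖) :
    ENNReal.ofReal (fundSol N x) ≤ ENNReal.ofReal (fundC N * d ^ (2 - (N : ℝ))) := by
  have h3 : (3 : ℝ) ≤ N := by exact_mod_cast hN
  have := (fundC_pos hN).le
  rw [fundSol_eq]
  exact ENNReal.ofReal_le_ofReal (mul_le_mul_of_nonneg_left
    (Real.rpow_le_rpow_of_nonpos hd h (by linarith)) this)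

/-- The mass close to the origin: there `|x - y|` is comparable to `|x|`. -/
lemma inner_le {N : ℕ} (hN : 3 ≤ N) {q : ℝ≥0∞} {β γ : ℝ} (hq : 1 ≤ q) (hβ : -(N : ℝ) < β)
    (hγN : γ ≠ -(N : ℝ)) :
    ∃ C : ℝ, 0 < C ∧ ∀ (g : Euc N → ℝ) (M : ℝ≥0∞), StronglyMeasurable g →
      DyadicBound N q β γ g M → ∀ R : ℝ, 0 < R → ∀ x ∈ annulusA N R,
      ∫⁻ y in ball 0 (R / 4), ENNReal.ofReal (fundSol N (x - y)) * ‖g y‖ₑ ≤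
        ENNReal.ofReal (C * omegaWt (min (β + 2) 0) (max (γ + 2) (-(N : ℝ) + 2)) R) * M := by
  have hc : (N : ℝ) + γ ≠ 0 := fun h => hγN (by linarith)
  obtain ⟨C, hC, h⟩ := ball_le (N := N) (b := N + β) (by linarith) hc
  have hv := ballVol_pos N
  have hf := fundC_pos hN
  refine ⟨fundC N * 4 ^ ((N : ℝ) - 2) * C * ballVol N ^ (1 - 1 / q.toReal), by positivity,
    fun g M hg hM R hR x hx => ?_⟩
  have h0 := h (volume.withDensity fun y => ‖g y‖ₑ) _ R
    (withDensity_absolutelyContinuous _ _ (volume_singleton_zero hN)) hR fun ρ hρ => by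
      rw [withDensity_apply _ (measurableSet_annulusA N ρ)]
      exact hM.lintegral_le hq hg hρ
  rw [withDensity_apply _ measurableSet_ball] at h0
  calc ∫⁻ y in ball 0 (R / 4), ENNReal.ofReal (fundSol N (x - y)) * ‖g y‖ₑ
      ≤ ∫⁻ y in ball 0 (R / 4), ENNReal.ofReal (fundC N * (R / 4) ^ (2 - (N : ℝ))) * ‖g y‖ₑ := by
        refine setLIntegral_mono' measurableSet_ball fun y hy => ?_
        refine mul_le_mul_left (fundSol_le hN (by positivity) ?_) _
        have h1 := (mem_annulusA.mp hx).1
        have h2 : ‖y‖ < R / 4 := by simpa using hy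
        linarith [norm_sub_norm_le x y]
    _ = ENNReal.ofReal (fundC N * (R / 4) ^ (2 - (N : ℝ))) * ∫⁻ y in ball 0 (R / 4), ‖g y‖ₑ :=
        lintegral_const_mul' _ _ ENNReal.ofReal_ne_top
    _ ≤ ENNReal.ofReal (fundC N * (R / 4) ^ (2 - (N : ℝ))) * ∫⁻ y in ball 0 R, ‖g y‖ₑ := by
        gcongr
        linarith
    _ ≤ _ := by
        refine (mul_le_mul_right h0 _).trans ?_
        have hw := (omegaWt_pos_s9 (N + β) (max (N + γ) 0) hR).le
        rw [← mul_assoc, ← mul_assoc, ← ENNReal.ofReal_mul (by positivity),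
          ← ENNReal.ofReal_mul (by positivity)]
        refine mul_le_mul_left (ENNReal.ofReal_le_ofReal ?_) M
        calc _ = fundC N * 4 ^ ((N : ℝ) - 2) * C * ballVol N ^ (1 - 1 / q.toReal) *
              (R ^ (2 - (N : ℝ)) * omegaWt (N + β) (max (N + γ) 0) R) := by
              rw [Real.div_rpow hR.le (by norm_num), ← neg_sub (N : ℝ) 2,
                Real.rpow_neg (by norm_num : (0:ℝ) ≤ 4)]
              field_simp
          _ ≤ _ := by
              rw [rpow_mul_omegaWt _ _ _ hR]
              refine mul_le_mul_of_nonneg_left (omegaWt_mono hR ?_ ?_) (by positivity)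
              · exact (min_le_left _ _).trans (by linarith)
              · rw [← max_add_add_left]
                exact max_le_max (by linarith) (by linarith)

/-- The mass far from the origin: there `|x - y|` is comparable to `|y|`. -/
lemma outer_le {N : ℕ} (hN : 3 ≤ N) {q : ℝ≥0∞} {β γ : ℝ} (hq : 1 ≤ q) (hβ2 : β ≠ -2)
    (hγ : γ < -2) :
    ∃ C : ℝ, 0 < C ∧ ∀ (g : Euc N → ℝ) (M : ℝ≥0∞), StronglyMeasurable g →
      DyadicBound N q β γ g M → ∀ R : ℝ, 0 < R → ∀ x ∈ annulusA N R,
      ∫⁻ y in (ball 0 (2 * R))ᶜ, ENNReal.ofReal (fundSol N (x - y)) * ‖g y‖ₑ ≤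
        ENNReal.ofReal (C * omegaWt (min (β + 2) 0) (max (γ + 2) (-(N : ℝ) + 2)) R) * M := by
  have h3 : (3 : ℝ) ≤ N := by exact_mod_cast hN
  have hb : β + 2 ≠ 0 := fun h => hβ2 (by linarith)
  obtain ⟨C, hC, h⟩ := compl_ball_le (N := N) hb (c := γ + 2) (by linarith)
  have hv := ballVol_pos N
  have hf := fundC_pos hN
  refine ⟨fundC N * 2 ^ ((N : ℝ) - 2) * C * 2 ^ ((N : ℝ) - 2) * ballVol N ^ (1 - 1 / q.toReal),
    by positivity, fun g M hg hM R hR x hx => ?_⟩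
  have h0 := h (volume.withDensity fun y => ENNReal.ofReal (‖y‖ ^ (2 - (N : ℝ))) * ‖g y‖ₑ)
    (ENNReal.ofReal (2 ^ ((N : ℝ) - 2)) * (ENNReal.ofReal (ballVol N ^ (1 - 1 / q.toReal)) * M)) R
    (withDensity_absolutelyContinuous _ _ (volume_singleton_zero hN)) hR fun ρ hρ => by
      refine (withDensity_annulusA_le (by linarith) hρ _).trans
        ((mul_le_mul_right (hM.lintegral_le hq hg hρ) _).trans (le_of_eq ?_))
      rw [← mul_assoc, ← ENNReal.ofReal_mul (by positivity),
        ← mul_assoc (ENNReal.ofReal (omegaWt (β + 2) (γ + 2) ρ)),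
        ← ENNReal.ofReal_mul (omegaWt_pos_s9 _ _ hρ).le]
      congr 2
      rw [Real.div_rpow hρ.le (by norm_num), ← neg_sub (N : ℝ) 2,
        Real.rpow_neg (by norm_num : (0:ℝ) ≤ 2), div_inv_eq_mul, mul_right_comm,
        rpow_mul_omegaWt _ _ _ hρ]
      congr 2 <;> ring
  rw [withDensity_apply _ measurableSet_ball.compl] at h0
  calc ∫⁻ y in (ball 0 (2 * R))ᶜ, ENNReal.ofReal (fundSol N (x - y)) * ‖g y‖ₑ
      ≤ ∫⁻ y in (ball 0 (2 * R))ᶜ, ENNReal.ofReal (fundC N * 2 ^ ((N : ℝ) - 2)) *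
          (ENNReal.ofReal (‖y‖ ^ (2 - (N : ℝ))) * ‖g y‖ₑ) := by
        refine setLIntegral_mono' measurableSet_ball.compl fun y hy => ?_
        have h1 := (mem_annulusA.mp hx).2
        have h2 : 2 * R ≤ ‖y‖ := by simpa using hy
        have h4 : ‖y‖ / 2 ≤ ‖x - y‖ := by
          rw [norm_sub_rev]; linarith [norm_sub_norm_le y x]
        have hy0 : 0 < ‖y‖ := by linarith
        rw [← mul_assoc, ← ENNReal.ofReal_mul (by positivity)]
        refine mul_le_mul_left ((fundSol_le hN (by positivity) h4).trans (le_of_eq ?_)) _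
        rw [Real.div_rpow hy0.le (by norm_num), ← neg_sub (N : ℝ) 2,
          Real.rpow_neg (by norm_num : (0:ℝ) ≤ 2)]
        congr 1
        field_simp
    _ = ENNReal.ofReal (fundC N * 2 ^ ((N : ℝ) - 2)) *
          ∫⁻ y in (ball 0 (2 * R))ᶜ, ENNReal.ofReal (‖y‖ ^ (2 - (N : ℝ))) * ‖g y‖ₑ :=
        lintegral_const_mul' _ _ ENNReal.ofReal_ne_top
    _ ≤ ENNReal.ofReal (fundC N * 2 ^ ((N : ℝ) - 2)) *
          ∫⁻ y in (ball 0 R)ᶜ, ENNReal.ofReal (‖y‖ ^ (2 - (N : ℝ))) * ‖g y‖ₑ := by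
        gcongr
        linarith
    _ ≤ _ := by
        refine (mul_le_mul_right h0 _).trans ?_
        have hw := (omegaWt_pos_s9 (min (β + 2) 0) (γ + 2) hR).le
        rw [← mul_assoc, ← mul_assoc, ← mul_assoc, ← ENNReal.ofReal_mul (by positivity),
          ← ENNReal.ofReal_mul (by positivity), ← ENNReal.ofReal_mul (by positivity)]
        refine mul_le_mul_left (ENNReal.ofReal_le_ofReal ?_) M
        calc _ = fundC N * 2 ^ ((N : ℝ) - 2) * C * 2 ^ ((N : ℝ) - 2) *
              ballVol N ^ (1 - 1 / q.toReal) * omegaWt (min (β + 2) 0) (γ + 2) R := by ring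
          _ ≤ _ := mul_le_mul_of_nonneg_left
              (omegaWt_mono hR le_rfl (le_max_left _ _)) (by positivity)

/-- The fundamental solution truncated to the ball of radius `3R`. -/
def truncSol (N : ℕ) (R : ℝ) : Euc N → ℝ≥0∞ :=
  (ball 0 (3 * R)).indicator fun z => ENNReal.ofReal (fundSol N z)

lemma measurable_truncSol (N : ℕ) (R : ℝ) : Measurable (truncSol N R) :=
  (measurable_fundSol N).indicator measurableSet_ball

/-- The fundamental solution lies locally in `L^s` for `s < N / (N - 2)`. -/
lemma truncSol_norm_le {N : ℕ} (hN : 3 ≤ N) {s : ℝ} (hs0 : 0 < s) (hs : 1 - 2 / (N : ℝ) < 1 / s) :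
    ∃ C : ℝ, 0 < C ∧ ∀ R : ℝ, 0 < R → (∫⁻ z, truncSol N R z ^ s) ^ (1 / s) ≤
      ENNReal.ofReal (C * R ^ ((N : ℝ) / s + 2 - N)) := by
  have h3 : (3 : ℝ) ≤ N := by exact_mod_cast hN
  have hp : ((N : ℝ) - 2) * s < N := by
    have h1 : (1 - 2 / (N : ℝ)) * (N * s) < 1 / s * (N * s) :=
      mul_lt_mul_of_pos_right hs (by positivity)
    have e1 : (1 - 2 / (N : ℝ)) * (N * s) = (N - 2) * s := by field_simp
    have e2 : 1 / s * (N * s) = N := by field_simp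
    linarith
  obtain ⟨C, hC, h⟩ := lintegral_ball_rpow_le hN (mul_nonneg (by linarith) hs0.le) hp
  have hf := fundC_pos hN
  refine ⟨(fundC N ^ s * C * 3 ^ ((N : ℝ) - (N - 2) * s)) ^ (1 / s), by positivity,
    fun R hR => ?_⟩
  have hint : ∫⁻ z, truncSol N R z ^ s ≤ ENNReal.ofReal
      (fundC N ^ s * C * 3 ^ ((N : ℝ) - (N - 2) * s) * R ^ ((N : ℝ) - (N - 2) * s)) := by
    calc ∫⁻ z, truncSol N R z ^ s
        = ∫⁻ z, (ball (0 : Euc N) (3 * R)).indicator (fun z => ENNReal.ofReal (fundC N ^ s) *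
            ENNReal.ofReal (‖z‖ ^ (-(((N : ℝ) - 2) * s)))) z := by
          refine lintegral_congr fun z => ?_
          unfold truncSol
          by_cases hz : z ∈ ball (0 : Euc N) (3 * R)
          · rw [Set.indicator_of_mem hz, Set.indicator_of_mem hz, fundSol_eq,
              ENNReal.ofReal_rpow_of_nonneg (by positivity) hs0.le,
              ← ENNReal.ofReal_mul (by positivity), Real.mul_rpow hf.le (by positivity),
              ← Real.rpow_mul (norm_nonneg z)]
            congr 3; ring
          · rw [Set.indicator_of_notMem hz, Set.indicator_of_notMem hz,
              ENNReal.zero_rpow_of_pos hs0]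
      _ = ENNReal.ofReal (fundC N ^ s) * ∫⁻ z in ball (0 : Euc N) (3 * R),
            ENNReal.ofReal (‖z‖ ^ (-(((N : ℝ) - 2) * s))) := by
          rw [lintegral_indicator measurableSet_ball,
            lintegral_const_mul' _ _ ENNReal.ofReal_ne_top]
      _ ≤ _ := by
          refine (mul_le_mul_right (h (3 * R) (by positivity)) _).trans (le_of_eq ?_)
          rw [← ENNReal.ofReal_mul (by positivity), Real.mul_rpow (by norm_num) hR.le]
          congr 1; ring
  refine (ENNReal.rpow_le_rpow hint (by positivity)).trans (le_of_eq ?_)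
  rw [ENNReal.ofReal_rpow_of_nonneg (by positivity) (by positivity),
    Real.mul_rpow (by positivity) (by positivity), ← Real.rpow_mul hR.le]
  congr 3
  field_simp
  ring

/-- The mass at distance comparable to `R`, estimated by Young's inequality. -/
lemma middle_le {N : ℕ} (hN : 3 ≤ N) {q r : ℝ≥0∞} (β γ : ℝ) (hq : 1 ≤ q) (hqr : q ≤ r)
    (h2 : 1 / q.toReal - 1 / r.toReal < 2 / (N : ℝ)) :
    ∃ C : ℝ, 0 < C ∧ ∀ (g : Euc N → ℝ) (M : ℝ≥0∞), StronglyMeasurable g →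
      DyadicBound N q β γ g M → ∀ R : ℝ, 0 < R → ∀ ρ, R / 2 ≤ ρ → ρ ≤ 2 * R →
      eLpNorm (fun x => ∫⁻ y, truncSol N R (x - y) *
          (annulusA N ρ).indicator (fun y => ‖g y‖ₑ) y) r volume ≤
        ENNReal.ofReal (C * (R ^ ((N : ℝ) / r.toReal) * omegaWt (β + 2) (γ + 2) R)) * M := by
  have h3 : (3 : ℝ) ≤ N := by exact_mod_cast hN
  have hN2 : 2 / (N : ℝ) ≤ 1 := by rw [div_le_one (by linarith)]; linarith
  have hpos : 0 < 1 + 1 / r.toReal - 1 / q.toReal := by linarith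
  -- The exponent which Young's inequality prescribes for the kernel.
  set s := 1 / (1 + 1 / r.toReal - 1 / q.toReal) with hs
  have hs0 : 0 < s := by positivity
  have hs' : 1 / s = 1 + 1 / r.toReal - 1 / q.toReal := by rw [hs, one_div_one_div]
  obtain ⟨C, hC, h⟩ := truncSol_norm_le hN hs0 (by rw [hs']; linarith)
  set D : ℝ := 2 ^ (|(N : ℝ) / q.toReal + β| + |(N : ℝ) / q.toReal + γ|) with hD
  refine ⟨C * D, by positivity, fun g M hg hM R hR ρ hρ1 hρ2 => ?_⟩
  have hρ : 0 < ρ := by linarith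
  have hgm : Measurable fun y => ‖g y‖ₑ := hg.measurable.enorm
  refine (young hq hqr hs0 hs' (measurable_truncSol N R)
    (hgm.indicator (measurableSet_annulusA N ρ))).trans ?_
  rw [eLpNorm_indicator_eq_eLpNorm_restrict (measurableSet_annulusA N ρ), eLpNorm_enorm]
  refine (mul_le_mul' (h R hR) (hM ρ hρ)).trans ?_
  have hw := (omegaWt_pos_s9 (β + 2) (γ + 2) hR).le
  rw [← mul_assoc, ← ENNReal.ofReal_mul (by positivity)]
  refine mul_le_mul_left (ENNReal.ofReal_le_ofReal ?_) M
  rw [rpow_mul_omegaWt _ _ _ hρ]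
  calc C * R ^ ((N : ℝ) / s + 2 - N) * omegaWt (N / q.toReal + β) (N / q.toReal + γ) ρ
      ≤ C * R ^ ((N : ℝ) / s + 2 - N) *
          (D * omegaWt (N / q.toReal + β) (N / q.toReal + γ) R) := by
        gcongr
        exact omegaWt_double _ _ hR hρ1 hρ2
    _ = C * D * (R ^ ((N : ℝ) / s + 2 - N) *
          omegaWt (N / q.toReal + β) (N / q.toReal + γ) R) := by ring
    _ = _ := by
        rw [rpow_mul_omegaWt _ _ _ hR, rpow_mul_omegaWt _ _ _ hR]
        have e : (N : ℝ) / s = N + N / r.toReal - N / q.toReal := by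
          rw [← mul_one_div, hs']; ring
        rw [e]
        congr 2 <;> ring

/-! ### Assembling the three regions -/

/-- A weighted norm bound gives its scale-by-scale form, also after changing `f` on a null set. -/
lemma dyadicBound_of_ae_eq {N : ℕ} {q : ℝ≥0∞} {β γ : ℝ} {f g : Euc N → ℝ}
    (hfg : f =ᵐ[volume] g) : DyadicBound N q β γ g (wNorm N q β γ f) := by
  intro R hR
  have hw := omegaWt_pos_s9 β γ hR
  rw [← eLpNorm_congr_ae (ae_restrict_of_ae hfg)]
  have h : ENNReal.ofReal (R ^ (-((N : ℝ) / q.toReal)) / omegaWt β γ R) *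
      eLpNorm f q (volume.restrict (annulusA N R)) ≤ wNorm N q β γ f :=
    le_iSup (fun R : {R : ℝ // 0 < R} =>
      ENNReal.ofReal (((R : ℝ) ^ (-((N : ℝ) / q.toReal))) / omegaWt β γ (R : ℝ)) *
        eLpNorm f q (volume.restrict (annulusA N (R : ℝ)))) ⟨R, hR⟩
  refine le_trans (le_of_eq ?_) (mul_le_mul_right h _)
  rw [← mul_assoc, ← ENNReal.ofReal_mul (by positivity), Real.rpow_neg hR.le]
  have : R ^ ((N : ℝ) / q.toReal) * omegaWt β γ R *
      ((R ^ ((N : ℝ) / q.toReal))⁻¹ / omegaWt β γ R) = 1 := by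
    have := Real.rpow_pos_of_pos hR ((N : ℝ) / q.toReal)
    field_simp
  rw [this, ENNReal.ofReal_one, one_mul]

/-- On the annulus `A(0, ρ)` with `ρ ≤ 2R` the truncation of the kernel is not seen from
`x ∈ A(0, R)`. -/
lemma setLIntegral_annulusA_le {N : ℕ} {R ρ : ℝ} (hρ : ρ ≤ 2 * R) {x : Euc N}
    (hx : x ∈ annulusA N R) (F : Euc N → ℝ≥0∞) :
    ∫⁻ y in annulusA N ρ, ENNReal.ofReal (fundSol N (x - y)) * F y ≤
      ∫⁻ y, truncSol N R (x - y) * (annulusA N ρ).indicator F y := by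
  rw [← lintegral_indicator (measurableSet_annulusA N ρ)]
  refine lintegral_mono fun y => ?_
  by_cases hy : y ∈ annulusA N ρ
  · have h1 := (mem_annulusA.mp hx).2
    have h2 := (mem_annulusA.mp hy).2
    have h3 : x - y ∈ ball (0 : Euc N) (3 * R) := by
      rw [mem_ball_zero_iff]; linarith [norm_sub_le x y]
    rw [Set.indicator_of_mem hy, Set.indicator_of_mem hy, truncSol, Set.indicator_of_mem h3]
  · rw [Set.indicator_of_notMem hy]
    exact zero_le

lemma univ_subset_regions (N : ℕ) (R : ℝ) :
    (Set.univ : Set (Euc N)) ⊆ (ball 0 (R / 4) ∪ (ball 0 (2 * R))ᶜ) ∪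
      (annulusA N (R / 2) ∪ annulusA N R ∪ annulusA N (2 * R)) := by
  intro y _
  simp only [Set.mem_union, mem_annulusA, Set.mem_compl_iff, mem_ball_zero_iff, not_lt]
  rcases lt_or_ge ‖y‖ (R / 4) with h | h
  · exact Or.inl (Or.inl h)
  rcases le_or_gt (2 * R) ‖y‖ with h1 | h1
  · exact Or.inl (Or.inr h1)
  refine Or.inr ?_
  rcases lt_or_ge ‖y‖ (R / 2) with h2 | h2
  · exact Or.inl (Or.inl ⟨by linarith, h2⟩)
  rcases lt_or_ge ‖y‖ R with h3 | h3
  · exact Or.inl (Or.inr ⟨h2, h3⟩)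
  · exact Or.inr ⟨by linarith, h1⟩

/-- The pointwise decomposition of the potential on `A(0, R)`. -/
lemma enorm_potential_le {N : ℕ} (hN : 3 ≤ N) {f g : Euc N → ℝ} (hfg : f =ᵐ[volume] g) {R : ℝ}
    (hR : 0 < R) {x : Euc N} (hx : x ∈ annulusA N R) :
    ‖∫ y, fundSol N (x - y) * f y‖ₑ ≤
      ((∫⁻ y in ball 0 (R / 4), ENNReal.ofReal (fundSol N (x - y)) * ‖g y‖ₑ) +
        ∫⁻ y in (ball 0 (2 * R))ᶜ, ENNReal.ofReal (fundSol N (x - y)) * ‖g y‖ₑ) +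
      ((∫⁻ y, truncSol N R (x - y) * (annulusA N (R / 2)).indicator (fun y => ‖g y‖ₑ) y) +
        (∫⁻ y, truncSol N R (x - y) * (annulusA N R).indicator (fun y => ‖g y‖ₑ) y) +
        ∫⁻ y, truncSol N R (x - y) * (annulusA N (2 * R)).indicator (fun y => ‖g y‖ₑ) y) := by
  have hf := (fundC_pos hN).le
  have e : ∫⁻ y, ‖fundSol N (x - y) * f y‖ₑ =
      ∫⁻ y, ENNReal.ofReal (fundSol N (x - y)) * ‖g y‖ₑ := by
    refine lintegral_congr_ae (hfg.mono fun y hy => ?_)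
    have : 0 ≤ fundSol N (x - y) := by rw [fundSol_eq]; positivity
    simp only [enorm_mul, hy, Real.enorm_of_nonneg this]
  refine (enorm_integral_le_lintegral_enorm _).trans (e.le.trans ?_)
  rw [← setLIntegral_univ]
  refine (lintegral_mono_set (univ_subset_regions N R)).trans ?_
  refine (lintegral_union_le _ _ _).trans (add_le_add (lintegral_union_le _ _ _) ?_)
  refine (lintegral_union_le _ _ _).trans (add_le_add ((lintegral_union_le _ _ _).trans
    (add_le_add ?_ ?_)) ?_)
  · exact setLIntegral_annulusA_le (by linarith) hx _
  · exact setLIntegral_annulusA_le (by linarith) hx _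
  · exact setLIntegral_annulusA_le le_rfl hx _

lemma eLpNorm_const_annulusA_le {N : ℕ} {r : ℝ≥0∞} {R : ℝ} (hR : 0 < R) (c : ℝ≥0∞) :
    eLpNorm (fun _ : Euc N => c) r (volume.restrict (annulusA N R)) ≤
      ENNReal.ofReal (R ^ ((N : ℝ) / r.toReal) * ballVol N ^ (1 / r.toReal)) * c := by
  have hv := (ballVol_pos N).le
  refine (eLpNorm_le_of_ae_enorm_bound (C := c) (by simp)).trans ?_
  rw [Measure.restrict_apply_univ, smul_eq_mul, mul_comm]
  refine mul_le_mul_left ((ENNReal.rpow_le_rpow (volume_annulusA_le N hR)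
    (by positivity)).trans (le_of_eq ?_)) _
  rw [ENNReal.ofReal_rpow_of_nonneg (by positivity) (by positivity),
    Real.mul_rpow (by positivity) hv, ← Real.rpow_mul hR.le, one_div, div_eq_mul_inv]

/-- **Lemma 2.2**: boundedness of the Newtonian potential `f ↦ Γ * f` from `L^q_{β,γ}` to
`L^r_{β_*,γ_*}` with `β_* = min{β+2,0}`, `γ_* = max{γ+2,-N+2}`, where either
`q < N/2` and `q ≤ r < ∞` with `1/q - 1/r < 2/N`, or `q > N/2` and `r = ∞`. -/
theorem newtonian_potential_weighted_bound
    (N : ℕ) (hN : 3 ≤ N) (q r : ℝ≥0∞) (β γ : ℝ)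
    (hq : 1 ≤ q) (hqN : q ≠ ENNReal.ofReal ((N : ℝ) / 2))
    (hβ : -(N : ℝ) < β) (hβ2 : β ≠ -2) (hγ : γ < -2) (hγN : γ ≠ -(N : ℝ))
    (hr₁ : q < ENNReal.ofReal ((N : ℝ) / 2) →
      q ≤ r ∧ r ≠ ⊤ ∧ 1 / q.toReal - 1 / r.toReal < 2 / (N : ℝ))
    (hr₂ : ENNReal.ofReal ((N : ℝ) / 2) < q → r = ⊤) :
    ∃ C : ℝ, 0 < C ∧ ∀ f : Euc N → ℝ, MemW N q β γ f →
      wNorm N r (min (β + 2) 0) (max (γ + 2) (-(N : ℝ) + 2))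
          (fun x => ∫ y, fundSol N (x - y) * f y)
        ≤ ENNReal.ofReal C * wNorm N q β γ f := by
  have h3 : (3 : ℝ) ≤ N := by exact_mod_cast hN
  -- Both cases amount to `q ≤ r` and `1/q - 1/r < 2/N`, where `toReal ⊤ = 0` gives `1/∞ = 0`.
  obtain ⟨hqr, h2⟩ : q ≤ r ∧ 1 / q.toReal - 1 / r.toReal < 2 / (N : ℝ) := by
    rcases hqN.lt_or_gt with h | h
    · exact ⟨(hr₁ h).1, (hr₁ h).2.2⟩
    · rw [hr₂ h]
      refine ⟨le_top, ?_⟩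
      simp only [ENNReal.toReal_top, _root_.div_zero, sub_zero]
      rcases eq_or_ne q ⊤ with hqt | hqt
      · simp only [hqt, ENNReal.toReal_top, _root_.div_zero]
        positivity
      · have h' := (ENNReal.ofReal_lt_iff_lt_toReal (by positivity) hqt).mp h
        rw [show 2 / (N : ℝ) = 1 / ((N : ℝ) / 2) by field_simp]
        exact one_div_lt_one_div_of_lt (by positivity) h'
  obtain ⟨C₁, hC₁, h₁⟩ := inner_le hN hq hβ hγN
  obtain ⟨C₂, hC₂, h₂⟩ := outer_le hN hq hβ2 hγ
  obtain ⟨C₃, hC₃, h₃⟩ := middle_le hN β γ hq hqr h2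
  have hv := ballVol_pos N
  refine ⟨(C₁ + C₂) * ballVol N ^ (1 / r.toReal) + 3 * C₃, by positivity, fun f hf => ?_⟩
  set M := wNorm N q β γ f with hMdef
  obtain ⟨g, hg, hfg⟩ := hf.1
  have hM : DyadicBound N q β γ g M := dyadicBound_of_ae_eq hfg
  refine iSup_le fun ⟨R, hR⟩ => ?_
  set ω := omegaWt (min (β + 2) 0) (max (γ + 2) (-(N : ℝ) + 2)) R with hω
  have hω0 : 0 < ω := omegaWt_pos_s9 _ _ hR
  set G : ℝ → Euc N → ℝ≥0∞ := fun ρ x => ∫⁻ y, truncSol N R (x - y) *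
    (annulusA N ρ).indicator (fun y => ‖g y‖ₑ) y with hG
  have hGm : ∀ ρ, Measurable (G ρ) := fun ρ => measurable_conv (measurable_truncSol N R)
    (hg.measurable.enorm.indicator (measurableSet_annulusA N ρ))
  have hGle : ∀ ρ, R / 2 ≤ ρ → ρ ≤ 2 * R →
      eLpNorm (G ρ) r (volume.restrict (annulusA N R)) ≤
        ENNReal.ofReal (C₃ * (R ^ ((N : ℝ) / r.toReal) * ω)) * M := fun ρ hρ1 hρ2 => by
    refine (eLpNorm_mono_measure _ Measure.restrict_le_self).trans
      ((h₃ g M hg hM R hR ρ hρ1 hρ2).trans ?_)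
    refine mul_le_mul_left (ENNReal.ofReal_le_ofReal ?_) M
    gcongr
    exact omegaWt_mono hR (min_le_left _ _) (le_max_left _ _)
  set c : ℝ≥0∞ := ENNReal.ofReal (C₁ * ω) * M + ENNReal.ofReal (C₂ * ω) * M with hc
  have hpt : ∀ᵐ x ∂(volume.restrict (annulusA N R)),
      ‖∫ y, fundSol N (x - y) * f y‖ₑ ≤
        ‖((fun _ => c : Euc N → ℝ≥0∞) + (G (R / 2) + G R + G (2 * R))) x‖ₑ := by
    refine (ae_restrict_mem (measurableSet_annulusA N R)).mono fun x hx => ?_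
    rw [enorm_eq_self]
    exact (enorm_potential_le hN hfg hR hx).trans (add_le_add_left
      (add_le_add (h₁ g M hg hM R hR x hx) (h₂ g M hg hM R hR x hx)) _)
  have hr1 : 1 ≤ r := hq.trans hqr
  have hsum : eLpNorm (fun x => ∫ y, fundSol N (x - y) * f y) r
      (volume.restrict (annulusA N R)) ≤
      ENNReal.ofReal (R ^ ((N : ℝ) / r.toReal) * ballVol N ^ (1 / r.toReal)) * c +
      (ENNReal.ofReal (C₃ * (R ^ ((N : ℝ) / r.toReal) * ω)) * M +
        ENNReal.ofReal (C₃ * (R ^ ((N : ℝ) / r.toReal) * ω)) * M +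
        ENNReal.ofReal (C₃ * (R ^ ((N : ℝ) / r.toReal) * ω)) * M) := by
    refine (eLpNorm_mono_enorm_ae hpt).trans ?_
    refine (eLpNorm_add_le aestronglyMeasurable_const
      (((hGm _).add (hGm _)).add (hGm _)).aestronglyMeasurable hr1).trans
      (add_le_add (eLpNorm_const_annulusA_le hR c) ?_)
    refine (eLpNorm_add_le ((hGm _).add (hGm _)).aestronglyMeasurable
      (hGm _).aestronglyMeasurable hr1).trans
      (add_le_add ?_ (hGle _ (by linarith) le_rfl))
    exact (eLpNorm_add_le (hGm _).aestronglyMeasurable (hGm _).aestronglyMeasurable hr1).trans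
      (add_le_add (hGle _ le_rfl (by linarith)) (hGle _ (by linarith) (by linarith)))
  refine (mul_le_mul_right hsum _).trans (le_of_eq ?_)
  have hRr := Real.rpow_pos_of_pos hR ((N : ℝ) / r.toReal)
  rw [hc, ← add_mul, ← add_mul, ← add_mul, ← mul_assoc, ← add_mul, ← mul_assoc]
  congr 1
  rw [← ENNReal.ofReal_add (by positivity) (by positivity),
    ← ENNReal.ofReal_add (by positivity) (by positivity),
    ← ENNReal.ofReal_add (by positivity) (by positivity),
    ← ENNReal.ofReal_mul (by positivity), ← ENNReal.ofReal_add (by positivity) (by positivity),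
    ← ENNReal.ofReal_mul (by positivity)]
  congr 1
  change R ^ (-((N : ℝ) / r.toReal)) / ω * _ = _
  rw [Real.rpow_neg hR.le]
  field_simp
  ring
end
end
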